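/- arXiv:1710.01563 — 2 statements merged into one kernel-verified Lean document; each statement's English description precedes it below -/
import Mathlib

section
/- Let q be an odd prime power and F a finite field with q elements, and let G = PSL₄(F) = SL(4,F)/center. Then G has a maximal subgroup H of odd index admitting a normal subgroup N ⊴ H of index 2 in H with N isomorphic to PSp₄(F) (the quotient of the symplectic group Sp(4,F) by its center), if and only if q ≡ 3 (mod 4). (Such an H is a group of shape PSp₄(q).2.) -/
/-!
Let `q` be the order of `F`.

If `q ≡ 1 [MOD 4]`, take an odd prime `r ∣ q ^ 2 + 1`. As `q` has order `4` modulo `r`, an element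
`x` of order `r` generates a field of order `q ^ 4` inside the matrix algebra. Hence the centralizer
of `x` in `PSL₄` has odd order, and `x` commutes with at most four of its conjugates. If `x` is in
`PSp₄`, its class there has length `≡ 4 [MOD r]`. Were `PSp₄` of index two in some `H ≤ PSL₄`, the
class of `x` in `H` would be twice as long, since the centralizer of `x` in `H` has odd order and so
lies in `PSp₄`. But modulo `r` a class is as long as the number of its elements that commute with
`x`. This number is then four both in `PSp₄` and in `H`, so that `8 ≡ 4 [MOD r]`.

Otherwise the scalar matrices of determinant one are symplectic, and a subgroup `PSp₄.2` has index
`q ^ 2 * (q ^ 3 - 1) / 2`, which is odd just when `q ≡ 3 [MOD 4]`. In this case the maps of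
determinant one that multiply the symplectic form by a scalar `ε` provide such a subgroup: taking
determinants, `ε ^ 4 = 1`, whence `ε = ± 1`. This subgroup is maximal because a map outside it
conjugates some symplectic transvection to one that is not symplectic, and this one together with
the symplectic group generates all transvections.
-/

open Polynomial Matrix

section CommutingConjugates

variable {G : Type*} [Group G]

/-- The conjugates of `x` that commute with `x`. They are the fixed points of `x` on its own
conjugacy class, which makes their number a congruence invariant of the class. -/
def commutingConjugates (x : G) : Set G := {y | IsConj x y ∧ Commute x y}

theorem mapsTo_commutingConjugates {G' : Type*} [Group G'] (f : G →* G') (x : G) :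
    Set.MapsTo f (commutingConjugates x) (commutingConjugates (f x)) :=
  fun _ hy => ⟨f.map_isConj hy.1, hy.2.map f⟩

theorem ncard_commutingConjugates_le_of_injective {G' : Type*} [Group G'] [Finite G']
    {f : G →* G'} (hf : Function.Injective f) (x : G) :
    (commutingConjugates x).ncard ≤ (commutingConjugates (f x)).ncard :=
  Set.ncard_le_ncard_of_injOn f (mapsTo_commutingConjugates f x) hf.injOn

theorem index_centralizer_modEq_ncard_commutingConjugates [Finite G] {p : ℕ} [Fact p.Prime]
    {x : G} (hx : IsPGroup p (Subgroup.zpowers x)) :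
    (Subgroup.centralizer {x}).index ≡ (commutingConjugates x).ncard [MOD p] := by
  let P := Subgroup.zpowers (ConjAct.toConjAct x)
  let C := MulAction.orbit (ConjAct G) x
  have hindex : (Subgroup.centralizer {x}).index = Nat.card C := by
    rw [Subgroup.centralizer_eq_comap_stabilizer]
    exact (Subgroup.index_comap_of_surjective (f := ConjAct.toConjAct.toMonoidHom) _
      ConjAct.toConjAct.surjective).trans (MulAction.index_stabilizer (ConjAct G) x)
  have hfixed (y : C) : y ∈ MulAction.fixedPoints P C ↔ Commute x y := by
    change (∀ g : P, g • y = y) ↔ x * y = y * x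
    rw [← mul_inv_eq_iff_eq_mul]
    refine ⟨fun h => congrArg Subtype.val (h ⟨_, Subgroup.mem_zpowers _⟩), fun h g => ?_⟩
    have hle : P ≤ MulAction.stabilizer (ConjAct G) y :=
      Subgroup.zpowers_le.2 (Subtype.ext h)
    exact hle g.2
  have himage : Subtype.val '' MulAction.fixedPoints P C = commutingConjugates x := by
    ext y
    simp only [Set.mem_image, hfixed]
    constructor
    · rintro ⟨y, hy, rfl⟩
      exact ⟨(ConjAct.mem_orbit_conjAct.1 y.2).symm, hy⟩
    · exact fun hy => ⟨⟨y, ConjAct.mem_orbit_conjAct.2 hy.1.symm⟩, hy.2, rfl⟩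
  rw [hindex, ← himage, Set.ncard_image_of_injective _ Subtype.val_injective]
  have hP : IsPGroup p P := hx
  exact hP.card_modEq_card_fixedPoints C

end CommutingConjugates

section IndexTwo

variable {G : Type*} [Group G]

theorem le_of_odd_card_of_index_eq_two {N K : Subgroup G} (hK : Odd (Nat.card K))
    (hN : N.index = 2) : K ≤ N := by
  have := Subgroup.normal_of_index_eq_two hN
  have hdvd : N.relIndex K ∣ 2 := hN ▸ N.relIndex_dvd_index_of_normal K
  refine Subgroup.relIndex_eq_one.1 ((Nat.prime_two.eq_one_or_self_of_dvd _ hdvd).resolve_right ?_)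
  intro h
  exact Nat.not_even_iff_odd.2 hK (even_iff_two_dvd.2 (h ▸ Subgroup.relIndex_dvd_card N K))

theorem centralizer_subgroupOf_eq {N : Subgroup G} (x : N) :
    (Subgroup.centralizer {(x : G)}).subgroupOf N = Subgroup.centralizer {x} := by
  ext y
  simp [Subgroup.mem_subgroupOf, Subgroup.mem_centralizer_singleton_iff, Subtype.ext_iff]

theorem index_centralizer_eq_two_mul {N : Subgroup G} (hN : N.index = 2) (x : N)
    (hx : Odd (Nat.card (Subgroup.centralizer {(x : G)}))) :
    (Subgroup.centralizer {(x : G)}).index = 2 * (Subgroup.centralizer {x}).index := by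
  rw [← Subgroup.relIndex_mul_index (le_of_odd_card_of_index_eq_two hx hN), hN, mul_comm,
    ← centralizer_subgroupOf_eq]
  rfl

/-- The class of `x` in `G` is twice as long as its class in `N`. As `x` has at least `k` commuting
conjugates in `N` and at most `k` in `G`, it has `k` in both, whence `2 * k ≡ k [MOD r]`. -/
theorem not_index_centralizer_modEq_of_index_eq_two [Finite G] {N : Subgroup G}
    (hN : N.index = 2) {r k : ℕ} [Fact r.Prime] (hk : 0 < k) (hkr : k < r) {x : N}
    (hx : IsPGroup r (Subgroup.zpowers x))
    (hodd : Odd (Nat.card (Subgroup.centralizer {(x : G)})))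
    (hle : (commutingConjugates (x : G)).ncard ≤ k) :
    ¬ (Subgroup.centralizer {x}).index ≡ k [MOD r] := by
  intro hmod
  have hx' : IsPGroup r (Subgroup.zpowers (x : G)) :=
    MonoidHom.map_zpowers N.subtype x ▸ hx.map N.subtype
  have hge : k ≤ (commutingConjugates x).ncard := by
    have h : k % r = _ := hmod.symm.trans (index_centralizer_modEq_ncard_commutingConjugates hx)
    rw [← Nat.mod_eq_of_lt hkr, h]
    exact Nat.mod_le _ _
  have hkG : (commutingConjugates (x : G)).ncard = k := hle.antisymm <|
    hge.trans (ncard_commutingConjugates_le_of_injective N.subtype_injective x)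
  have htwo : 2 * k ≡ k [MOD r] := by
    have h := index_centralizer_modEq_ncard_commutingConjugates hx'
    rw [hkG, index_centralizer_eq_two_mul hN x hodd] at h
    exact (hmod.mul_left 2).symm.trans h
  have hzero : k ≡ 0 [MOD r] := Nat.ModEq.add_right_cancel' k (by simpa [two_mul] using htwo)
  exact Nat.not_dvd_of_pos_of_lt hk hkr ((Nat.modEq_zero_iff_dvd).1 hzero)

theorem card_centralizer_dvd_of_injective {G' : Type*} [Group G'] {f : G →* G'}
    (hf : Function.Injective f) (x : G) :
    Nat.card (Subgroup.centralizer {x}) ∣ Nat.card (Subgroup.centralizer {f x}) := by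
  rw [← Subgroup.card_map_of_injective hf]
  refine Subgroup.card_dvd_of_le (Subgroup.map_le_iff_le_comap.2 fun y hy => ?_)
  rw [Subgroup.mem_comap, Subgroup.mem_centralizer_singleton_iff, ← map_mul,
    Subgroup.mem_centralizer_singleton_iff.1 hy, map_mul]

theorem index_centralizer_mulEquiv {G' : Type*} [Group G'] (φ : G ≃* G') (x : G) :
    (Subgroup.centralizer {φ x}).index = (Subgroup.centralizer {x}).index := by
  have hcomap : (Subgroup.centralizer {φ x}).comap φ.toMonoidHom = Subgroup.centralizer {x} := by
    ext y
    simp only [Subgroup.mem_comap, Subgroup.mem_centralizer_singleton_iff,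
      MulEquiv.toMonoidHom_eq_coe, MonoidHom.coe_coe, ← map_mul, φ.injective.eq_iff]
  rw [← hcomap, Subgroup.index_comap_of_surjective _ φ.surjective]

end IndexTwo

section CentralQuotient

variable {Γ Q : Type*} [Group Γ] [Group Q] {π : Γ →* Q} {r : ℕ}

theorem card_comap_of_surjective (hsurj : Function.Surjective π) (K : Subgroup Q) :
    Nat.card (K.comap π) = Nat.card K * Nat.card π.ker := by
  have hle : π.ker ≤ K.comap π := fun x hx => Subgroup.mem_comap.2 (hx.symm ▸ K.one_mem)
  rw [← Subgroup.relIndex_bot_left (K.comap π), ← Subgroup.relIndex_mul_relIndex ⊥ _ _ bot_le hle,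
    Subgroup.relIndex_bot_left, Subgroup.relIndex_ker,
    Subgroup.map_comap_eq_self_of_surjective hsurj, mul_comm]

theorem exists_pow_eq_one_of_coprime_card_ker (hsurj : Function.Surjective π)
    (hr : r.Coprime (Nat.card π.ker)) {x : Q} (hx : x ^ r = 1) : ∃ y, π y = x ∧ y ^ r = 1 := by
  obtain ⟨y, rfl⟩ := hsurj x
  obtain ⟨s, hsr, hsk⟩ := Nat.chineseRemainder hr 1 0
  refine ⟨y ^ s, ?_, ?_⟩
  · rw [map_pow, pow_eq_pow_iff_modEq.2 (hsr.of_dvd (orderOf_dvd_of_pow_eq_one hx)), pow_one]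
  · obtain ⟨t, rfl⟩ := Nat.modEq_zero_iff_dvd.1 hsk
    have hyr : y ^ r ∈ π.ker := by rw [MonoidHom.mem_ker, map_pow, hx]
    have hpow : (y ^ r) ^ Nat.card π.ker = 1 :=
      congrArg Subtype.val (pow_card_eq_one' (x := (⟨y ^ r, hyr⟩ : π.ker)))
    rw [← pow_mul, mul_right_comm, mul_comm _ r, pow_mul, pow_mul, hpow, one_pow]

variable (hcenter : π.ker ≤ Subgroup.center Γ) (hr : r.Coprime (Nat.card π.ker))

include hcenter hr

/-- If `c * y * c⁻¹ = z * y` with `z` in the kernel, then `z ^ r = 1` as `z` is central. -/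
theorem commute_map_iff_of_pow_eq_one {c y : Γ} (hy : y ^ r = 1) :
    Commute (π c) (π y) ↔ Commute c y := by
  refine ⟨fun h => ?_, fun h => h.map π⟩
  set z := c * y * c⁻¹ * y⁻¹ with hz
  have hzker : z ∈ π.ker := by
    simp only [MonoidHom.mem_ker, hz, map_mul, map_inv, h.eq, mul_inv_cancel_right, mul_inv_cancel]
  have hzr : z ^ r = 1 := by
    have hcomm : Commute z y := (Subgroup.mem_center_iff.1 (hcenter hzker) y).symm
    have hconj : c * y * c⁻¹ = z * y := by rw [hz, inv_mul_cancel_right]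
    have h := congrArg (· ^ r) hconj
    simpa only [conj_pow, hcomm.mul_pow, hy, mul_one, mul_inv_cancel, eq_comm] using h
  have hzcard : z ^ Nat.card π.ker = 1 :=
    congrArg Subtype.val (pow_card_eq_one' (x := (⟨z, hzker⟩ : π.ker)))
  have hz1 : z = 1 := by
    rw [← orderOf_eq_one_iff, ← Nat.dvd_one, ← hr.gcd_eq_one]
    exact Nat.dvd_gcd (orderOf_dvd_of_pow_eq_one hzr) (orderOf_dvd_of_pow_eq_one hzcard)
  rw [hz1, eq_comm, mul_inv_eq_one, mul_inv_eq_iff_eq_mul] at hz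
  exact hz

theorem comap_centralizer_of_pow_eq_one {y : Γ} (hy : y ^ r = 1) :
    (Subgroup.centralizer {π y}).comap π = Subgroup.centralizer {y} := by
  ext c
  rw [Subgroup.mem_comap, Subgroup.mem_centralizer_singleton_iff,
    Subgroup.mem_centralizer_singleton_iff]
  exact commute_map_iff_of_pow_eq_one hcenter hr hy

theorem index_centralizer_map_of_pow_eq_one (hsurj : Function.Surjective π) {y : Γ}
    (hy : y ^ r = 1) : (Subgroup.centralizer {π y}).index = (Subgroup.centralizer {y}).index := by
  rw [← comap_centralizer_of_pow_eq_one hcenter hr hy, Subgroup.index_comap_of_surjective _ hsurj]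

theorem card_centralizer_map_mul_card_ker (hsurj : Function.Surjective π) {y : Γ}
    (hy : y ^ r = 1) :
    Nat.card (Subgroup.centralizer {π y}) * Nat.card π.ker =
      Nat.card (Subgroup.centralizer {y}) := by
  rw [← comap_centralizer_of_pow_eq_one hcenter hr hy, card_comap_of_surjective hsurj]

theorem ncard_commutingConjugates_map_le [Finite Γ] (hsurj : Function.Surjective π) {y : Γ}
    (hy : y ^ r = 1) : (commutingConjugates (π y)).ncard ≤ (commutingConjugates y).ncard := by
  refine (Set.ncard_le_ncard ?_ (Set.toFinite (π '' commutingConjugates y))).trans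
    (Set.ncard_image_le (Set.toFinite _))
  rintro x ⟨hconj, hcomm⟩
  obtain ⟨g, rfl⟩ := isConj_iff.1 hconj
  obtain ⟨c, rfl⟩ := hsurj g
  rw [← map_inv, ← map_mul, ← map_mul] at hcomm ⊢
  refine ⟨c * y * c⁻¹, ⟨isConj_iff.2 ⟨c, rfl⟩, ?_⟩, rfl⟩
  exact ((commute_map_iff_of_pow_eq_one hcenter hr hy).1 hcomm.symm).symm

end CentralQuotient

theorem minpoly_eq_of_isConj (F : Type*) {A : Type*} [Field F] [Ring A] [Algebra F A] {x y : A}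
    (h : IsConj x y) : minpoly F x = minpoly F y := by
  obtain ⟨c, hc⟩ := h
  have hy : MulSemiringAction.toAlgEquiv F A (ConjAct.toConjAct c) x = y := by
    rw [MulSemiringAction.toAlgEquiv_apply, ConjAct.units_smul_def, ConjAct.ofConjAct_toConjAct,
      Units.mul_inv_eq_iff_eq_mul, hc.eq]
  rw [← hy, minpoly.algEquiv_eq]

section MaximalSubfield

universe u

variable {F : Type u} {n : Type*} [Field F] [Fintype n] [DecidableEq n]

section Embedding

variable [Nonempty n] {L : Type*} [Field L] [Algebra F L] {φ : L →ₐ[F] Matrix n n F}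
  (hL : Module.finrank F L = Fintype.card n)

include hL

theorem exists_linearEquiv_mulVec_eq :
    ∃ e : L ≃ₗ[F] n → F, ∀ k l, φ k *ᵥ e l = e (k * l) := by
  have : FiniteDimensional F L := Module.finite_of_finrank_pos (hL ▸ Fintype.card_pos)
  obtain ⟨v, hv⟩ := exists_ne (0 : n → F)
  let ψ : L →ₗ[F] n → F := (LinearMap.applyₗ v).comp (toLin'.toLinearMap.comp φ.toLinearMap)
  have hψ (k : L) : ψ k = φ k *ᵥ v := rfl
  have hmul (k l : L) : φ k *ᵥ ψ l = ψ (k * l) := by rw [hψ, hψ, map_mul, mulVec_mulVec]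
  have hinj : Function.Injective ψ := by
    rw [injective_iff_map_eq_zero]
    intro k hk
    by_contra hk0
    apply hv
    rw [← one_mulVec v, ← map_one φ, ← hψ, ← inv_mul_cancel₀ hk0, ← hmul, hk, mulVec_zero]
  exact ⟨ψ.linearEquivOfInjective hinj (hL.trans (Module.finrank_fintype_fun_eq_card F).symm), hmul⟩

theorem exists_eq_of_forall_commute {u : Matrix n n F} (hu : ∀ k, Commute u (φ k)) :
    ∃ k, φ k = u := by
  obtain ⟨e, he⟩ := exists_linearEquiv_mulVec_eq (φ := φ) hL
  refine ⟨e.symm (u *ᵥ e 1), Matrix.ext_of_mulVec_single fun i => ?_⟩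
  obtain ⟨l, hl⟩ := e.surjective (Pi.single i 1)
  rw [← hl, he, mul_comm, ← he, e.apply_symm_apply, mulVec_mulVec, ← (hu l).eq, ← mulVec_mulVec,
    he, mul_one]

theorem det_eq_norm (k : L) : (φ k).det = Algebra.norm F k := by
  obtain ⟨e, he⟩ := exists_linearEquiv_mulVec_eq (φ := φ) hL
  rw [Algebra.norm_apply, ← LinearMap.det_toLin', ← LinearMap.det_conj _ e]
  congr 1
  refine LinearMap.ext fun v => ?_
  obtain ⟨l, rfl⟩ := e.surjective v
  simp [he]

theorem commute_iff_exists_eq_of_adjoin_eq_top {a : L} (ha : Algebra.adjoin F {a} = ⊤)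
    {u : Matrix n n F} : Commute u (φ a) ↔ ∃ k, φ k = u := by
  refine ⟨fun hu => exists_eq_of_forall_commute hL fun k => ?_, ?_⟩
  · have hk : φ k ∈ Algebra.adjoin F {φ a} := by
      rw [← Set.image_singleton, ← AlgHom.map_adjoin, ha]
      exact Subalgebra.mem_map.2 ⟨k, Algebra.mem_top, rfl⟩
    exact Algebra.commute_of_mem_adjoin_singleton_of_commute hk hu
  · rintro ⟨k, rfl⟩
    exact (Commute.all k a).map φ

variable {Γ : Type*} [Group Γ] {ρ : Γ →* Matrix n n F} (hρ : Function.Injective ρ)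

include hρ

/-- The commuting conjugates of `y` lie in the field and have the same minimal polynomial as
`y`. -/
theorem ncard_commutingConjugates_le_card {a : L} (ha : Algebra.adjoin F {a} = ⊤) {y : Γ}
    (hy : ρ y = φ a) : (commutingConjugates y).ncard ≤ Fintype.card n := by
  classical
  have : FiniteDimensional F L := Module.finite_of_finrank_pos (hL ▸ Fintype.card_pos)
  let R := (minpoly F a).rootSet L
  have hmaps : Set.MapsTo ρ (commutingConjugates y) (φ '' R) := by
    rintro w ⟨hconj, hcomm⟩
    obtain ⟨k, hk⟩ := (commute_iff_exists_eq_of_adjoin_eq_top hL ha).1 (hy ▸ hcomm.symm.map ρ)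
    have hmin : minpoly F k = minpoly F a := by
      rw [← minpoly.algHom_eq φ φ.toRingHom.injective, ← minpoly.algHom_eq φ φ.toRingHom.injective,
        hk, ← hy, minpoly_eq_of_isConj F (ρ.map_isConj hconj)]
    exact ⟨k, mem_rootSet.2 ⟨minpoly.ne_zero (Algebra.IsIntegral.isIntegral a),
      hmin ▸ minpoly.aeval F k⟩, hk⟩
  calc (commutingConjugates y).ncard ≤ (φ '' R).ncard :=
        Set.ncard_le_ncard_of_injOn ρ hmaps hρ.injOn (Set.toFinite _)
    _ ≤ R.ncard := Set.ncard_image_le (Set.toFinite _)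
    _ ≤ (minpoly F a).natDegree := ncard_rootSet_le _ _
    _ ≤ Fintype.card n := hL ▸ minpoly.natDegree_le a

theorem card_centralizer_eq_of_forall_exists_iff [Finite L] {a : L}
    (ha : Algebra.adjoin F {a} = ⊤) {y : Γ} (hy : ρ y = φ a) {m : ℕ} (hm : m ≠ 0)
    (hdvd : m ∣ Nat.card L - 1) (h : ∀ k, (∃ g, ρ g = φ k) ↔ k ^ m = 1) :
    Nat.card (Subgroup.centralizer {y}) = m := by
  have hφ : Function.Injective φ := φ.toRingHom.injective
  have hmem (g : Γ) : g ∈ Subgroup.centralizer {y} ↔ ∃ k, φ k = ρ g := by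
    rw [Subgroup.mem_centralizer_singleton_iff, ← commute_iff_exists_eq_of_adjoin_eq_top hL ha,
      ← hy, commute_iff_eq, ← map_mul, ← map_mul, hρ.eq_iff]
  choose f hf using fun k : (powMonoidHom m : Lˣ →* Lˣ).ker =>
    (h (k : Lˣ)).2 (by simpa using congrArg Units.val (MonoidHom.mem_ker.1 k.2))
  have hbij : Function.Bijective fun k => (⟨f k, (hmem _).2 ⟨(k : Lˣ), (hf k).symm⟩⟩ :
      Subgroup.centralizer {y}) := by
    refine ⟨fun k l hkl => ?_, fun ⟨g, hg⟩ => ?_⟩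
    · have hfkl : f k = f l := congrArg Subtype.val hkl
      exact Subtype.ext (Units.ext (hφ (by rw [← hf, ← hf, hfkl])))
    · obtain ⟨k, hk⟩ := (hmem g).1 hg
      have hpow : k ^ m = 1 := (h k).1 ⟨g, hk.symm⟩
      refine ⟨⟨Units.ofPowEqOne k m hpow hm, Units.pow_ofPowEqOne _ _⟩, Subtype.ext (hρ ?_)⟩
      exact (hf _).trans hk
  rw [← Nat.card_eq_of_bijective _ hbij, IsCyclic.card_powMonoidHom_ker, Nat.card_units,
    Nat.gcd_eq_right hdvd]

end Embedding

theorem exists_algHom_of_irreducible_minpoly {y : Matrix n n F}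
    (hirr : Irreducible (minpoly F y)) :
    ∃ (L : Type u) (_ : Field L) (_ : Algebra F L) (φ : L →ₐ[F] Matrix n n F) (a : L),
      Module.finrank F L = (minpoly F y).natDegree ∧ Algebra.adjoin F {a} = ⊤ ∧ φ a = y := by
  have := Fact.mk hirr
  let φ : AdjoinRoot (minpoly F y) →ₐ[F] Matrix n n F :=
    Ideal.Quotient.liftₐ _ (aeval y) fun p hp =>
      aeval_eq_zero_of_dvd_aeval_eq_zero (Ideal.mem_span_singleton.1 hp) (minpoly.aeval F y)
  exact ⟨AdjoinRoot (minpoly F y), inferInstance, inferInstance, φ, AdjoinRoot.root _,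
    (AdjoinRoot.powerBasis hirr.ne_zero).finrank, AdjoinRoot.adjoinRoot_eq_top, aeval_X y⟩

variable [Nonempty n]

theorem card_centralizer_specialLinearGroup [Finite F] {y : SpecialLinearGroup n F}
    (hirr : Irreducible (minpoly F (y : Matrix n n F)))
    (hdeg : (minpoly F (y : Matrix n n F)).natDegree = Fintype.card n) :
    Nat.card (Subgroup.centralizer {y}) =
      ∑ i ∈ Finset.range (Fintype.card n), Nat.card F ^ i := by
  obtain ⟨L, _, _, φ, a, hL, ha, hy⟩ := exists_algHom_of_irreducible_minpoly hirr
  rw [hdeg] at hL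
  have : FiniteDimensional F L := Module.finite_of_finrank_pos (hL ▸ Fintype.card_pos)
  have : Finite L := Module.finite_of_finite F
  have hgeom := geom_sum_mul_of_one_le (Nat.succ_le_iff.2 (Nat.card_pos (α := F))) (Fintype.card n)
  refine card_centralizer_eq_of_forall_exists_iff hL SpecialLinearGroup.coeMonoidHom_injective ha
    hy.symm (m := ∑ i ∈ Finset.range (Fintype.card n), Nat.card F ^ i) ?_ ?_ fun k => ?_
  · exact (Finset.sum_pos (fun i _ => pow_pos Nat.card_pos i)
      (Finset.nonempty_range_iff.2 Fintype.card_ne_zero)).ne'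
  · rw [Module.natCard_eq_pow_finrank (K := F) (V := L), hL]
    exact ⟨_, hgeom.symm⟩
  · rw [← hL, ← FiniteField.algebraMap_norm_eq_pow_sum, map_eq_one_iff _ (algebraMap F L).injective,
      ← det_eq_norm hL (φ := φ)]
    exact ⟨fun ⟨g, hg⟩ => hg ▸ g.2, fun h => ⟨⟨φ k, h⟩, rfl⟩⟩

theorem ncard_commutingConjugates_specialLinearGroup_le {y : SpecialLinearGroup n F}
    (hirr : Irreducible (minpoly F (y : Matrix n n F)))
    (hdeg : (minpoly F (y : Matrix n n F)).natDegree = Fintype.card n) :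
    (commutingConjugates y).ncard ≤ Fintype.card n := by
  obtain ⟨L, _, _, φ, a, hL, ha, hy⟩ := exists_algHom_of_irreducible_minpoly hirr
  exact ncard_commutingConjugates_le_card (hL.trans hdeg)
    SpecialLinearGroup.coeMonoidHom_injective ha hy.symm

end MaximalSubfield

section SymplecticForm

variable {l R : Type*} [Fintype l] [DecidableEq l] [CommRing R]

variable (l R) in
/-- The standard symplectic form on `R²ⁿ`, whose Gram matrix is `Matrix.J`. -/
noncomputable def symplecticForm : LinearMap.BilinForm R (l ⊕ l → R) := Matrix.toBilin' (J l R)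

variable (l R) in
/-- The adjoint `A ↦ J⁻¹ * Aᵀ * J` with respect to the symplectic form, written with `J⁻¹ = -J`. -/
noncomputable def symplecticAdjoint :
    Matrix (l ⊕ l) (l ⊕ l) R →ₗ[R] Matrix (l ⊕ l) (l ⊕ l) R :=
  -(LinearMap.mulLeft R (J l R) ∘ₗ LinearMap.mulRight R (J l R) ∘ₗ
    (transposeLinearEquiv _ _ R R).toLinearMap)

theorem symplecticForm_apply (x y : l ⊕ l → R) :
    symplecticForm l R x y = x ⬝ᵥ (J l R *ᵥ y) := Matrix.toBilin'_apply' _ _ _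

theorem symplecticForm_swap (x y : l ⊕ l → R) :
    symplecticForm l R x y = -symplecticForm l R y x := by
  rw [symplecticForm_apply, symplecticForm_apply, dotProduct_mulVec, ← mulVec_transpose,
    J_transpose, neg_mulVec, neg_dotProduct, dotProduct_comm]

theorem symplecticForm_self (x : l ⊕ l → R) : symplecticForm l R x x = 0 := by
  rw [symplecticForm_apply]
  simp [dotProduct, J, mulVec, fromBlocks, Matrix.one_apply, mul_comm]

theorem symplecticForm_single (i j : l ⊕ l) :
    symplecticForm l R (Pi.single i 1) (Pi.single j 1) = J l R i j := by
  rw [symplecticForm_apply]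
  simp

theorem symplecticAdjoint_apply (A : Matrix (l ⊕ l) (l ⊕ l) R) :
    symplecticAdjoint l R A = -(J l R * Aᵀ * J l R) := by
  simp [symplecticAdjoint, Matrix.mul_assoc]

theorem symplecticForm_symplecticAdjoint (A : Matrix (l ⊕ l) (l ⊕ l) R) (x y : l ⊕ l → R) :
    symplecticForm l R (symplecticAdjoint l R A *ᵥ x) y = symplecticForm l R x (A *ᵥ y) := by
  have h : (symplecticAdjoint l R A)ᵀ * J l R = J l R * A := by
    simp [symplecticAdjoint_apply, Matrix.mul_assoc, J_squared]
  rw [symplecticForm_apply, symplecticForm_apply, ← vecMul_transpose, ← dotProduct_mulVec,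
    mulVec_mulVec, mulVec_mulVec, h]

theorem symplecticAdjoint_one : symplecticAdjoint l R 1 = 1 := by
  simp [symplecticAdjoint_apply, J_squared]

theorem symplecticAdjoint_mul (A B : Matrix (l ⊕ l) (l ⊕ l) R) :
    symplecticAdjoint l R (A * B) = symplecticAdjoint l R B * symplecticAdjoint l R A := by
  simp only [symplecticAdjoint_apply, transpose_mul, neg_mul_neg]
  calc -(J l R * (Bᵀ * Aᵀ) * J l R) = J l R * Bᵀ * (-1) * Aᵀ * J l R := by
        simp [Matrix.mul_assoc]
    _ = J l R * Bᵀ * J l R * (J l R * Aᵀ * J l R) := by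
        rw [← J_squared]
        simp only [Matrix.mul_assoc]

theorem mem_symplecticGroup_iff_symplecticAdjoint_mul {A : Matrix (l ⊕ l) (l ⊕ l) R} :
    A ∈ symplecticGroup l R ↔ symplecticAdjoint l R A * A = 1 := by
  rw [symplecticAdjoint_apply, neg_mul]
  refine ⟨SymplecticGroup.inv_left_mul_aux, fun h => SymplecticGroup.mem_iff'.2 ?_⟩
  calc Aᵀ * J l R * A = -(J l R * J l R) * (Aᵀ * J l R * A) := by simp [J_squared]
    _ = J l R * -(J l R * Aᵀ * J l R * A) := by simp [Matrix.mul_assoc]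
    _ = J l R := by rw [h, mul_one]

theorem mem_symplecticGroup_iff_symplecticForm {A : Matrix (l ⊕ l) (l ⊕ l) R} :
    A ∈ symplecticGroup l R ↔ ∀ x y, symplecticForm l R (A *ᵥ x) (A *ᵥ y) =
      symplecticForm l R x y := by
  have hgram (x y : l ⊕ l → R) :
      symplecticForm l R (A *ᵥ x) (A *ᵥ y) = x ⬝ᵥ ((Aᵀ * J l R * A) *ᵥ y) := by
    rw [symplecticForm_apply, ← vecMul_transpose, ← dotProduct_mulVec, mulVec_mulVec,
      mulVec_mulVec]
  simp_rw [SymplecticGroup.mem_iff', hgram, symplecticForm_apply]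
  refine ⟨fun h x y => by rw [h], fun h => Matrix.ext fun i j => ?_⟩
  simpa using h (Pi.single i 1) (Pi.single j 1)

end SymplecticForm

section SymplecticCentralizer

variable {l F : Type*} [Fintype l] [DecidableEq l] [Field F]

/-- On the field `F[y]`, taking adjoints is an automorphism sending `y` to `y⁻¹ = y ^ |F| ^ m`, so
it is `k ↦ k ^ |F| ^ m`. -/
theorem symplecticAdjoint_algHom_eq [Finite F] {L : Type*} [Field L] [Algebra F L]
    {φ : L →ₐ[F] Matrix (l ⊕ l) (l ⊕ l) F} {a : L} (ha : Algebra.adjoin F {a} = ⊤)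
    (hmem : φ a ∈ symplecticGroup l F) {m : ℕ} (hpow : φ a ^ (Nat.card F ^ m + 1) = 1) (k : L) :
    symplecticAdjoint l F (φ k) = φ (k ^ Nat.card F ^ m) := by
  have := Fintype.ofFinite F
  let θ : L →ₐ[F] Matrix (l ⊕ l) (l ⊕ l) F :=
    AlgHom.ofLinearMap (symplecticAdjoint l F ∘ₗ φ.toLinearMap)
      (by simp [symplecticAdjoint_one]) fun b c => by
        simp only [LinearMap.comp_apply, AlgHom.toLinearMap_apply]
        rw [mul_comm, map_mul, symplecticAdjoint_mul]
  let ψ := φ.comp (FiniteField.frobeniusAlgHom F L ^ m)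
  have hψ (b : L) : ψ b = φ (b ^ Nat.card F ^ m) := by
    simp [ψ, AlgHom.coe_pow, FiniteField.coe_frobeniusAlgHom, pow_iterate]
  have hθψ : θ = ψ := by
    refine AlgHom.ext_of_adjoin_eq_top ha ?_
    rintro _ rfl
    rw [hψ, map_pow]
    exact left_inv_eq_right_inv (mem_symplecticGroup_iff_symplecticAdjoint_mul.1 hmem)
      ((pow_succ' _ _).symm.trans hpow)
  rw [← hψ, ← hθψ]
  rfl

theorem card_centralizer_symplecticGroup [Finite F] [Nonempty l] {y : symplecticGroup l F}
    (hirr : Irreducible (minpoly F (y : Matrix (l ⊕ l) (l ⊕ l) F)))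
    (hdeg : (minpoly F (y : Matrix (l ⊕ l) (l ⊕ l) F)).natDegree = Fintype.card (l ⊕ l))
    (hpow : y ^ (Nat.card F ^ Fintype.card l + 1) = 1) :
    Nat.card (Subgroup.centralizer {y}) = Nat.card F ^ Fintype.card l + 1 := by
  obtain ⟨L, _, _, φ, a, hL, ha, hy⟩ := exists_algHom_of_irreducible_minpoly hirr
  rw [hdeg] at hL
  have : FiniteDimensional F L := Module.finite_of_finrank_pos (hL ▸ Fintype.card_pos)
  have : Finite L := Module.finite_of_finite F
  refine card_centralizer_eq_of_forall_exists_iff (ρ := (symplecticGroup l F).subtype) hL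
    Subtype.val_injective ha hy.symm (Nat.succ_ne_zero _) ?_ fun k => ?_
  · rw [Module.natCard_eq_pow_finrank (K := F) (V := L), hL, Fintype.card_sum, ← mul_two, pow_mul]
    exact ⟨_, by rw [← Nat.sq_sub_sq, one_pow]⟩
  · have hmem : φ a ∈ symplecticGroup l F := hy ▸ y.2
    have hpow' : φ a ^ (Nat.card F ^ Fintype.card l + 1) = 1 := hy ▸ congrArg Subtype.val hpow
    rw [show (∃ g, (symplecticGroup l F).subtype g = φ k) ↔ φ k ∈ symplecticGroup l F by simp,
      mem_symplecticGroup_iff_symplecticAdjoint_mul, symplecticAdjoint_algHom_eq ha hmem hpow',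
      ← map_mul, ← pow_succ, map_eq_one_iff φ φ.toRingHom.injective]

end SymplecticCentralizer

section PrimeOrder

variable {F n : Type*} [Field F] [Finite F] [Fintype n] [DecidableEq n]

theorem natDegree_eq_orderOf_of_dvd_cyclotomic {m : ℕ} (hm : (Nat.card F).Coprime m) {f : F[X]}
    (hirr : Irreducible f) (hf : f ∣ cyclotomic m F) :
    f.natDegree = orderOf (Nat.card F : ZMod m) := by
  have := Fintype.ofFinite F
  obtain ⟨p, hp⟩ := CharP.exists F
  obtain ⟨e, hprime, hcard⟩ := FiniteField.card F p
  have := Fact.mk hprime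
  rw [Nat.card_eq_fintype_card, hcard] at hm ⊢
  rw [natDegree_of_dvd_cyclotomic_of_irreducible hcard
    (hm.coprime_dvd_left (dvd_pow_self p e.2.ne')) hf hirr, ← orderOf_units, ZMod.coe_unitOfCoprime]

theorem irreducible_minpoly_of_pow_prime_eq_one {r : ℕ} (hr : r.Prime)
    (hn : orderOf (Nat.card F : ZMod r) = Fintype.card n) {y : Matrix n n F} (hy : y ^ r = 1)
    (hy1 : y ≠ 1) : Irreducible (minpoly F y) ∧ (minpoly F y).natDegree = Fintype.card n := by
  have := Fact.mk hr
  have hn0 : 0 < Fintype.card n := Fintype.card_pos_iff.2 <| by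
    by_contra! h
    exact hy1 (Subsingleton.elim y 1)
  have hcop : (Nat.card F).Coprime r := by
    rw [← ZMod.isUnit_iff_coprime]
    exact (orderOf_pos_iff.1 (hn ▸ hn0)).isUnit
  have hdvd : minpoly F y ∣ (X - 1) * cyclotomic r F := minpoly.dvd F y <| by
    rw [mul_comm, cyclotomic_prime_mul_X_sub_one F r]
    simp [hy]
  have hndvd : ¬ IsCoprime (minpoly F y) (cyclotomic r F) := fun h => hy1 <| by
    simpa [sub_eq_zero] using
      aeval_eq_zero_of_dvd_aeval_eq_zero (h.dvd_of_dvd_mul_right hdvd) (minpoly.aeval F y)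
  have hne : minpoly F y ≠ 0 := minpoly.ne_zero (Algebra.IsIntegral.isIntegral y)
  obtain ⟨f, hirr, hfy, hfr⟩ : ∃ f, Irreducible f ∧ f ∣ minpoly F y ∧ f ∣ cyclotomic r F := by
    by_contra! h
    exact hndvd (isCoprime_of_irreducible_dvd (fun h => hne h.1) h)
  have hdeg := (natDegree_eq_orderOf_of_dvd_cyclotomic hcop hirr hfr).trans hn
  have hle : (minpoly F y).natDegree ≤ f.natDegree := by
    rw [hdeg, ← charpoly_natDegree_eq_dim y]
    exact natDegree_le_of_dvd (minpoly_dvd_charpoly y) (charpoly_monic y).ne_zero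
  have hassoc : Associated f (minpoly F y) := associated_of_dvd_of_natDegree_le hfy hne hle
  exact ⟨hassoc.irreducible hirr,
    (natDegree_eq_of_degree_eq (degree_eq_degree_of_associated hassoc)).symm.trans hdeg⟩

theorem orderOf_natCast_eq_four {r q : ℕ} (hr : r.Prime) (hr2 : r ≠ 2) (hrq : r ∣ q ^ 2 + 1) :
    orderOf (q : ZMod r) = 4 := by
  have := Fact.mk hr
  have : Fact (2 < r) := ⟨hr.two_le.lt_of_ne hr2.symm⟩
  have hsq : (q : ZMod r) ^ 2 = -1 := eq_neg_of_add_eq_zero_left <| by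
    exact_mod_cast (ZMod.natCast_eq_zero_iff _ _).2 hrq
  refine orderOf_eq_prime_pow (p := 2) (n := 1) ?_ ?_
  · rw [pow_one, hsq]
    exact ZMod.neg_one_ne_one
  · rw [show 2 ^ (1 + 1) = 2 * 2 from rfl, pow_mul, hsq, neg_one_sq]

theorem exists_odd_prime_dvd_sq_add_one {q : ℕ} (hq : Odd q) (hq1 : q ≠ 1) :
    ∃ r, r.Prime ∧ r ≠ 2 ∧ r ∣ q ^ 2 + 1 := by
  obtain ⟨k, rfl⟩ := hq
  have hk : 0 < k * (k + 1) := Nat.mul_pos (by omega) k.succ_pos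
  obtain ⟨r, hr, hrd⟩ := Nat.exists_prime_and_dvd (n := 2 * (k * (k + 1)) + 1) (by omega)
  refine ⟨r, hr, ?_, hrd.trans ⟨2, by ring⟩⟩
  rintro rfl
  omega

end PrimeOrder

section SymplecticOrder

variable {l F : Type*} [Fintype l] [DecidableEq l] [Field F]

theorem exists_symplecticForm_eq_one {x : l ⊕ l → F} (hx : x ≠ 0) :
    ∃ y, symplecticForm l F x y = 1 := by
  obtain ⟨y, hy⟩ : ∃ y, symplecticForm l F x y ≠ 0 := by
    by_contra! h
    refine hx (dotProduct_eq_zero_iff.1 fun w => ?_)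
    simpa [symplecticForm_apply, mulVec_neg, mulVec_mulVec, J_squared, neg_mulVec] using
      h (-(J l F *ᵥ w))
  exact ⟨(symplecticForm l F x y)⁻¹ • y, by simp [hy]⟩

theorem natCard_fiber_eq_pow_of_surjective {V W : Type*} [AddCommGroup V] [Module F V]
    [FiniteDimensional F V] [AddCommGroup W] [Module F W] {f : V →ₗ[F] W}
    (hf : Function.Surjective f) {k : ℕ} (hk : Module.finrank F W + k = Module.finrank F V)
    (w : W) : Nat.card {x // f x = w} = Nat.card F ^ k := by
  obtain ⟨x₀, rfl⟩ := hf w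
  have e : {x // f x = f x₀} ≃ LinearMap.ker f :=
    (Equiv.subRight x₀).subtypeEquiv fun x => by simp [sub_eq_zero]
  have hrank := f.finrank_range_add_finrank_ker
  rw [LinearMap.range_eq_top.2 hf, finrank_top] at hrank
  rw [Nat.card_congr e, Module.natCard_eq_pow_finrank (K := F)]
  congr 1
  omega

/-- A symplectic family: a family of vectors of `F²ⁿ` whose Gram matrix is `Matrix.J`. Its
`inr`-members and `inl`-members are the first and the second vectors of hyperbolic pairs. -/
def IsSymplecticFamily {ι : Type*} [DecidableEq ι] (v : ι ⊕ ι → l ⊕ l → F) : Prop :=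
  ∀ i j, symplecticForm l F (v i) (v j) = J ι F i j

theorem isSymplecticFamily_col_iff {A : Matrix (l ⊕ l) (l ⊕ l) F} :
    IsSymplecticFamily A.col ↔ A ∈ symplecticGroup l F := by
  rw [SymplecticGroup.mem_iff', ← Matrix.ext_iff]
  have hgram (i j : l ⊕ l) : symplecticForm l F (A.col i) (A.col j) = (Aᵀ * J l F * A) i j := by
    rw [symplecticForm_apply, ← mulVec_single_one, ← mulVec_single_one, ← vecMul_transpose,
      ← dotProduct_mulVec, mulVec_mulVec, mulVec_mulVec]
    simp
  simp [IsSymplecticFamily, hgram]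

namespace IsSymplecticFamily

variable {ι : Type*} [DecidableEq ι] {v : ι ⊕ ι → l ⊕ l → F}

theorem exists_mem_span_symplecticForm_eq [Finite ι] (hv : IsSymplecticFamily v) (c : ι ⊕ ι → F) :
    ∃ w ∈ Submodule.span F (Set.range v), ∀ i, symplecticForm l F (v i) w = c i := by
  have := Fintype.ofFinite ι
  refine ⟨∑ j, (-(J ι F *ᵥ c)) j • v j, Submodule.sum_mem _ fun j _ =>
    Submodule.smul_mem _ _ (Submodule.subset_span ⟨j, rfl⟩), fun i => ?_⟩
  have h : (J ι F *ᵥ -(J ι F *ᵥ c)) i = c i := by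
    rw [mulVec_neg, mulVec_mulVec, J_squared, neg_mulVec, neg_neg, one_mulVec]
  rw [← h, map_sum, mulVec, dotProduct]
  exact Finset.sum_congr rfl fun j _ => by rw [map_smul, hv, smul_eq_mul, mul_comm]

theorem pi_surjective [Finite ι] (hv : IsSymplecticFamily v) :
    Function.Surjective (LinearMap.pi fun i => symplecticForm l F (v i)) := fun c =>
  let ⟨w, _, hw⟩ := hv.exists_mem_span_symplecticForm_eq c
  ⟨w, funext hw⟩

theorem pi_prod_surjective [Finite ι] (hv : IsSymplecticFamily v) {x : l ⊕ l → F} (hx : x ≠ 0)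
    (hvx : ∀ i, symplecticForm l F (v i) x = 0) :
    Function.Surjective
      ((LinearMap.pi fun i => symplecticForm l F (v i)).prod (symplecticForm l F x)) := by
  rintro ⟨c, t⟩
  obtain ⟨z, hz⟩ := exists_symplecticForm_eq_one hx
  obtain ⟨w, hw, hvw⟩ :=
    hv.exists_mem_span_symplecticForm_eq (c - fun i => t * symplecticForm l F (v i) z)
  have hxw : symplecticForm l F x w = 0 := by
    refine (Submodule.span_le (p := LinearMap.ker (symplecticForm l F x))).2 ?_ hw
    rintro _ ⟨i, rfl⟩
    rw [SetLike.mem_coe, LinearMap.mem_ker, symplecticForm_swap, hvx, neg_zero]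
  exact ⟨w + t • z, Prod.ext (funext fun i => by simp [hvw]) (by simp [hxw, hz])⟩

theorem card_orthogonal [Finite F] [Fintype ι] (hv : IsSymplecticFamily v) {k : ℕ}
    (hk : Fintype.card ι + k = Fintype.card l) :
    Nat.card {x : l ⊕ l → F // x ≠ 0 ∧ ∀ i, symplecticForm l F (v i) x = 0} =
      Nat.card F ^ (2 * k) - 1 := by
  let f := LinearMap.pi fun i => symplecticForm l F (v i)
  have hset : {x : l ⊕ l → F | x ≠ 0 ∧ ∀ i, symplecticForm l F (v i) x = 0} =
      {x | f x = 0} \ {0} := by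
    ext x
    simp [f, funext_iff, and_comm]
  calc _ = ({x | f x = 0} \ {0}).ncard := congrArg Set.ncard hset
    _ = {x | f x = 0}.ncard - 1 := Set.ncard_sdiff_singleton_of_mem (map_zero f)
    _ = Nat.card F ^ (2 * k) - 1 := congrArg (· - 1) <|
      natCard_fiber_eq_pow_of_surjective hv.pi_surjective
        (by simp only [Module.finrank_fintype_fun_eq_card, Fintype.card_sum]; omega) 0

theorem card_hyperbolicPartner [Fintype ι] (hv : IsSymplecticFamily v) {k : ℕ}
    (hk : Fintype.card ι + (k + 1) = Fintype.card l) {x : l ⊕ l → F} (hx : x ≠ 0)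
    (hvx : ∀ i, symplecticForm l F (v i) x = 0) :
    Nat.card {y : l ⊕ l → F // (∀ i, symplecticForm l F (v i) y = 0) ∧
      symplecticForm l F x y = 1} = Nat.card F ^ (2 * k + 1) := by
  have h := natCard_fiber_eq_pow_of_surjective (hv.pi_prod_surjective hx hvx) (k := 2 * k + 1)
    (by simp only [Module.finrank_prod, Module.finrank_fintype_fun_eq_card, Module.finrank_self,
      Fintype.card_sum]; omega) (0, 1)
  simpa [funext_iff] using h

theorem cons {k : ℕ} {v : Fin k ⊕ Fin k → l ⊕ l → F} (hv : IsSymplecticFamily v)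
    {x y : l ⊕ l → F} (hvx : ∀ i, symplecticForm l F (v i) x = 0)
    (hvy : ∀ i, symplecticForm l F (v i) y = 0) (hxy : symplecticForm l F x y = 1) :
    IsSymplecticFamily
      (Sum.elim (Fin.cons y (v ∘ Sum.inl)) (Fin.cons x (v ∘ Sum.inr)) :
      Fin (k + 1) ⊕ Fin (k + 1) → l ⊕ l → F) := by
  have hxv i := (symplecticForm_swap x (v i)).trans (neg_eq_zero.2 (hvx i))
  have hyv i := (symplecticForm_swap y (v i)).trans (neg_eq_zero.2 (hvy i))
  have hyx := (symplecticForm_swap y x).trans (congrArg Neg.neg hxy)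
  rintro (i | i) (j | j) <;> refine Fin.cases ?_ (fun i => ?_) i <;>
    refine Fin.cases ?_ (fun j => ?_) j <;>
    simp [*, hv _ _, J, symplecticForm_self, Matrix.one_apply, (Fin.succ_ne_zero _).symm]

end IsSymplecticFamily

variable (l F) in
/-- A symplectic family is extended by a hyperbolic pair orthogonal to it. -/
noncomputable def symplecticFamilyConsEquiv (k : ℕ) :
    {v : Fin (k + 1) ⊕ Fin (k + 1) → l ⊕ l → F // IsSymplecticFamily v} ≃
      Σ v : {v : Fin k ⊕ Fin k → l ⊕ l → F // IsSymplecticFamily v},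
        Σ x : {x // x ≠ 0 ∧ ∀ i, symplecticForm l F (v.1 i) x = 0},
          {y // (∀ i, symplecticForm l F (v.1 i) y = 0) ∧ symplecticForm l F x y = 1} where
  toFun v := ⟨⟨v.1 ∘ Sum.map Fin.succ Fin.succ, fun i j => by
      rcases i with i | i <;> rcases j with j | j <;> simp [v.2 _ _, J, Matrix.one_apply]⟩,
    ⟨v.1 (.inr 0), fun h => by simpa [h, J] using v.2 (.inr 0) (.inl 0), by
      rintro (i | i) <;> simp [v.2 _ _, J]⟩,
    ⟨v.1 (.inl 0), by rintro (i | i) <;> simp [v.2 _ _, J],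
      by simp [v.2 _ _, J]⟩⟩
  invFun p := ⟨Sum.elim (Fin.cons p.2.2.1 (p.1.1 ∘ Sum.inl)) (Fin.cons p.2.1.1 (p.1.1 ∘ Sum.inr)),
    p.1.2.cons p.2.1.2.2 p.2.2.2.1 p.2.2.2.2⟩
  left_inv v := by
    ext i : 2
    rcases i with i | i <;> refine Fin.cases ?_ (fun i => ?_) i <;> simp
  right_inv p := by
    obtain ⟨⟨v, hv⟩, x, y⟩ := p
    have h : (Sum.elim (Fin.cons y.1 (v ∘ Sum.inl)) (Fin.cons x.1 (v ∘ Sum.inr)) :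
        Fin (k + 1) ⊕ Fin (k + 1) → l ⊕ l → F) ∘ Sum.map Fin.succ Fin.succ = v := by
      ext (i | i) <;> simp
    refine Sigma.ext (Subtype.ext h) ?_
    dsimp only [Sum.elim_inl, Sum.elim_inr, Fin.cons_zero]
    congr!
    · exact (Subtype.heq_iff_coe_eq fun z => by rw [h]).2 rfl
    · exact (Subtype.heq_iff_coe_eq fun z => by rw [h]; rfl).2 rfl

theorem card_symplecticFamily [Finite F] {k : ℕ} (hk : k ≤ Fintype.card l) :
    Nat.card {v : Fin k ⊕ Fin k → l ⊕ l → F // IsSymplecticFamily v} =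
      ∏ i ∈ Finset.range k, (Nat.card F ^ (2 * (Fintype.card l - i)) - 1) *
        Nat.card F ^ (2 * (Fintype.card l - i) - 1) := by
  induction k with
  | zero =>
    have : Unique {v : Fin 0 ⊕ Fin 0 → l ⊕ l → F // IsSymplecticFamily v} :=
      ⟨⟨⟨0, by simp [IsSymplecticFamily]⟩⟩, fun v => Subtype.ext (Subsingleton.elim _ _)⟩
    simp
  | succ k ih =>
    obtain ⟨m, hm⟩ := Nat.exists_eq_add_of_le hk
    have hx (v : {v : Fin k ⊕ Fin k → l ⊕ l → F // IsSymplecticFamily v}) :=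
      v.2.card_orthogonal (k := m + 1) (by rw [Fintype.card_fin]; omega)
    have hy (v : {v : Fin k ⊕ Fin k → l ⊕ l → F // IsSymplecticFamily v})
        (x : {x // x ≠ 0 ∧ ∀ i, symplecticForm l F (v.1 i) x = 0}) :=
      v.2.card_hyperbolicPartner (k := m) (by rw [Fintype.card_fin]; omega) x.2.1 x.2.2
    have := Fintype.ofFinite F
    classical
    simp_rw [Nat.card_congr (symplecticFamilyConsEquiv l F k), Nat.card_sigma, hy, Finset.sum_const,
      Finset.card_univ, ← Nat.card_eq_fintype_card, hx, smul_eq_mul]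
    rw [Finset.sum_const, Finset.card_univ, ← Nat.card_eq_fintype_card, ih (by omega), smul_eq_mul,
      Finset.prod_range_succ, Nat.card_eq_fintype_card (α := l),
      show Fintype.card l - k = m + 1 by omega, show 2 * (m + 1) - 1 = 2 * m + 1 by omega]

variable (l F) in
theorem card_symplecticGroup [Finite F] : Nat.card (symplecticGroup l F) =
    ∏ i ∈ Finset.range (Fintype.card l), (Nat.card F ^ (2 * (i + 1)) - 1) *
      Nat.card F ^ (2 * i + 1) := by
  let e := Fintype.equivFin l
  have hA : symplecticGroup l F ≃ {v : l ⊕ l → l ⊕ l → F // IsSymplecticFamily v} :=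
    (Matrix.transposeAddEquiv _ _ F).toEquiv.subtypeEquiv fun A => isSymplecticFamily_col_iff.symm
  have hl : {v : l ⊕ l → l ⊕ l → F // IsSymplecticFamily v} ≃
      {v : Fin (Fintype.card l) ⊕ Fin (Fintype.card l) → l ⊕ l → F // IsSymplecticFamily v} :=
    (Equiv.arrowCongr (e.sumCongr e) (Equiv.refl _)).subtypeEquiv fun v => by
      simp [IsSymplecticFamily, J, Matrix.one_apply, Sum.forall, e.forall_congr_left]
  rw [Nat.card_congr (hA.trans hl), card_symplecticFamily le_rfl, ← Finset.prod_range_reflect]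
  refine Finset.prod_congr rfl fun i hi => ?_
  have := Finset.mem_range.1 hi
  rw [show Fintype.card l - (Fintype.card l - 1 - i) = i + 1 by omega,
    show 2 * (i + 1) - 1 = 2 * i + 1 by omega]

end SymplecticOrder

section SpecialLinearOrder

variable {n F : Type*} [Fintype n] [DecidableEq n] [Field F]

theorem mem_center_specialLinearGroup_iff_exists_smul_one {g : SpecialLinearGroup n F} :
    g ∈ Subgroup.center (SpecialLinearGroup n F) ↔ ∃ t : F, (g : Matrix n n F) = t • 1 := by
  rw [Matrix.SpecialLinearGroup.mem_center_iff]
  simp_rw [scalar_apply, ← smul_one_eq_diagonal]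
  refine ⟨fun ⟨t, _, ht⟩ => ⟨t, ht.symm⟩, fun ⟨t, ht⟩ => ⟨t, ?_, ht.symm⟩⟩
  simpa [ht] using g.det_coe

variable (n F) in
theorem card_center_specialLinearGroup [Finite F] [Nonempty n] :
    Nat.card (Subgroup.center (SpecialLinearGroup n F)) =
      (Nat.card F - 1).gcd (Fintype.card n) := by
  have hroots : rootsOfUnity (Fintype.card n) F = (powMonoidHom (Fintype.card n)).ker := rfl
  rw [Nat.card_congr
      (Matrix.SpecialLinearGroup.center_equiv_rootsOfUnity' (Classical.arbitrary n)).toEquiv,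
    hroots, IsCyclic.card_powMonoidHom_ker, Nat.card_units]

variable (n F) in
theorem card_specialLinearGroup_mul_card_units [Nonempty n] :
    Nat.card (SpecialLinearGroup n F) * Nat.card Fˣ = Nat.card (GL n F) := by
  have hrange : (Matrix.SpecialLinearGroup.toGL : SpecialLinearGroup n F →* GL n F).range =
      GeneralLinearGroup.det.ker := SetLike.coe_injective Matrix.SpecialLinearGroup.range_toGL
  have hindex : (GeneralLinearGroup.det : GL n F →* Fˣ).ker.index = Nat.card Fˣ := by
    rw [Subgroup.index_ker, MonoidHom.range_eq_top.2 GeneralLinearGroup.det_surjective,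
      Subgroup.card_top]
  rw [Nat.card_congr (MonoidHom.ofInjective Matrix.SpecialLinearGroup.toGL_injective).toEquiv,
    hrange, ← hindex, Subgroup.card_mul_index]

variable (F) in
theorem card_specialLinearGroup_fin_four [Finite F] :
    Nat.card (SpecialLinearGroup (Fin 4) F) =
      Nat.card F ^ 2 * (Nat.card F ^ 3 - 1) * Nat.card (symplecticGroup (Fin 2) F) := by
  have := Fintype.ofFinite F
  have h := card_specialLinearGroup_mul_card_units (Fin 4) F
  obtain ⟨q, hq⟩ : ∃ q, Nat.card F = q + 2 := Nat.exists_eq_add_of_le' Finite.one_lt_card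
  rw [card_GL_field, Nat.card_units, ← Nat.card_eq_fintype_card, Fin.prod_univ_four] at h
  refine Nat.eq_of_mul_eq_mul_right (Nat.sub_pos_of_lt Finite.one_lt_card) (h.trans ?_)
  rw [card_symplecticGroup, Fintype.card_fin, Finset.prod_range_succ, Finset.prod_range_one, hq]
  have hsub (a b : ℕ) (hab : a ≤ b) :
      (q + 2) ^ b - (q + 2) ^ a = (q + 2) ^ a * ((q + 2) ^ (b - a) - 1) := by
    rw [Nat.mul_sub, ← pow_add, Nat.add_sub_cancel' hab, mul_one]
  simp only [Fin.val_zero, Fin.val_one, Fin.val_two]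
  rw [hsub 0 4 (by simp), hsub 1 4 (by simp), hsub 2 4 (by simp), hsub _ 4 (by simp)]
  simp only [pow_zero, pow_one, zero_add, mul_zero, mul_one, one_mul, Nat.sub_zero, Nat.reduceSub,
    Nat.reduceAdd, Nat.reduceMul, Fin.coe_ofNat_eq_mod, Nat.reduceMod]
  ring

end SpecialLinearOrder

section SymplecticCenter

theorem exists_eq_smul_one_of_forall_mulVec {n F : Type*} [Fintype n] [DecidableEq n] [Field F]
    {A : Matrix n n F} (h : ∀ v, v ≠ 0 → ∃ t : F, A *ᵥ v = t • v) : ∃ t : F, A = t • 1 := by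
  obtain ⟨t, ht⟩ := (toLin' A).exists_eq_smul_id_of_forall_notLinearIndependent fun v hv => by
    obtain ⟨t, ht⟩ := h v (by simpa using hv.ne_zero 0)
    rw [toLin'_apply, ht, LinearIndependent.pair_iff] at hv
    simpa using hv t (-1) (by simp)
  refine ⟨t, toLin'.injective ?_⟩
  rw [ht, map_smul, toLin'_one]
  rfl

variable {l F : Type*} [Fintype l] [DecidableEq l] [Field F]

variable (l F) in
/-- The inclusion of the symplectic group into the special linear group. -/
def symplecticToSL : symplecticGroup l F →* SpecialLinearGroup (l ⊕ l) F where
  toFun A := ⟨A, SymplecticGroup.det_eq_one A.2⟩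
  map_one' := rfl
  map_mul' _ _ := rfl

theorem symplecticToSL_injective : Function.Injective (symplecticToSL l F) := fun _ _ h =>
  Subtype.ext (congrArg (Matrix.SpecialLinearGroup.coeMonoidHom (R := F)) h)

theorem mem_range_symplecticToSL {g : SpecialLinearGroup (l ⊕ l) F} :
    g ∈ (symplecticToSL l F).range ↔ (g : Matrix (l ⊕ l) (l ⊕ l) F) ∈ symplecticGroup l F :=
  ⟨fun ⟨A, hA⟩ => hA ▸ A.2, fun h => ⟨⟨g, h⟩, rfl⟩⟩

/-- The linear map `x ↦ x + B(w, x) v` for the symplectic form `B`: a transvection if `v` and `w`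
are orthogonal, symplectic if they are proportional. -/
def formTransvection (v w : l ⊕ l → F) : Matrix (l ⊕ l) (l ⊕ l) F := 1 + vecMulVec v (w ᵥ* J l F)

theorem formTransvection_mulVec (v w x : l ⊕ l → F) :
    formTransvection v w *ᵥ x = x + symplecticForm l F w x • v := by
  rw [formTransvection, add_mulVec, one_mulVec, vecMulVec_mulVec, ← dotProduct_mulVec,
    symplecticForm_apply]
  simp

theorem formTransvection_smul_mem_symplecticGroup (v : l ⊕ l → F) (c : F) :
    formTransvection v (c • v) ∈ symplecticGroup l F := by
  refine mem_symplecticGroup_iff_symplecticForm.2 fun x y => ?_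
  simp only [formTransvection_mulVec, map_add, map_smul, LinearMap.add_apply, LinearMap.smul_apply,
    symplecticForm_self, symplecticForm_swap x v, smul_eq_mul]
  ring

theorem smul_one_mem_symplecticGroup {t : F} (ht : t ^ 2 = 1) :
    t • (1 : Matrix (l ⊕ l) (l ⊕ l) F) ∈ symplecticGroup l F := by
  refine mem_symplecticGroup_iff_symplecticForm.2 fun x y => ?_
  simp [smul_mulVec, ← mul_assoc, ← sq, ht]

theorem exists_eq_smul_one_of_mem_center_symplecticGroup {A : symplecticGroup l F}
    (hA : A ∈ Subgroup.center (symplecticGroup l F)) :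
    ∃ t : F, (A : Matrix (l ⊕ l) (l ⊕ l) F) = t • 1 := by
  refine exists_eq_smul_one_of_forall_mulVec fun v hv => ?_
  obtain ⟨x, hx⟩ := exists_symplecticForm_eq_one hv
  have h := congrArg (fun M : symplecticGroup l F => M.1 *ᵥ x)
    (Subgroup.mem_center_iff.1 hA ⟨_, formTransvection_smul_mem_symplecticGroup v 1⟩)
  simp only [Submonoid.coe_mul, ← mulVec_mulVec, formTransvection_mulVec, mulVec_add, one_smul,
    hx, add_right_inj] at h
  exact ⟨_, h.symm⟩

theorem symplecticToSL_mem_center_iff {A : symplecticGroup l F} :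
    symplecticToSL l F A ∈ Subgroup.center (SpecialLinearGroup (l ⊕ l) F) ↔
      A ∈ Subgroup.center (symplecticGroup l F) := by
  refine ⟨fun h => Subgroup.mem_center_iff.2 fun C => symplecticToSL_injective ?_, fun h =>
    mem_center_specialLinearGroup_iff_exists_smul_one.2
      (exists_eq_smul_one_of_mem_center_symplecticGroup h)⟩
  rw [map_mul, map_mul, Subgroup.mem_center_iff.1 h]

theorem card_center_symplecticGroup_dvd :
    Nat.card (Subgroup.center (symplecticGroup l F)) ∣
      Nat.card (Subgroup.center (SpecialLinearGroup (l ⊕ l) F)) := by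
  rw [← Subgroup.card_map_of_injective symplecticToSL_injective]
  refine Subgroup.card_dvd_of_le ?_
  rintro _ ⟨A, hA, rfl⟩
  exact symplecticToSL_mem_center_iff.2 hA

theorem center_le_range_symplecticToSL
    (hroot : ∀ t : F, t ^ Fintype.card (l ⊕ l) = 1 → t ^ 2 = 1) :
    Subgroup.center (SpecialLinearGroup (l ⊕ l) F) ≤ (symplecticToSL l F).range := fun g hg => by
  obtain ⟨t, ht, hg⟩ := Matrix.SpecialLinearGroup.mem_center_iff.1 hg
  rw [mem_range_symplecticToSL, ← hg, scalar_apply, ← smul_one_eq_diagonal]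
  exact smul_one_mem_symplecticGroup (hroot t ht)

theorem card_center_symplecticGroup
    (hroot : ∀ t : F, t ^ Fintype.card (l ⊕ l) = 1 → t ^ 2 = 1) :
    Nat.card (Subgroup.center (symplecticGroup l F)) =
      Nat.card (Subgroup.center (SpecialLinearGroup (l ⊕ l) F)) := by
  have hcomap : (Subgroup.center (SpecialLinearGroup (l ⊕ l) F)).comap (symplecticToSL l F) =
      Subgroup.center (symplecticGroup l F) := Subgroup.ext fun _ => symplecticToSL_mem_center_iff
  rw [← Subgroup.card_map_of_injective symplecticToSL_injective, ← hcomap,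
    Subgroup.map_comap_eq_self (center_le_range_symplecticToSL hroot)]

end SymplecticCenter

section OddIndex

/-- The projective symplectic group `PSp(2n, F)`: the symplectic group modulo its center. -/
abbrev ProjectiveSymplecticGroup (l F : Type*) [Fintype l] [DecidableEq l] [CommRing F] :=
  symplecticGroup l F ⧸ Subgroup.center (symplecticGroup l F)

theorem sq_eq_one_of_pow_four_eq_one {F : Type*} [Field F] [Finite F] (hF : Nat.card F % 4 ≠ 1)
    {t : F} (ht : t ^ 4 = 1) : t ^ 2 = 1 := by
  have := Fintype.ofFinite F
  rw [Nat.card_eq_fintype_card] at hF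
  have hprod : (t ^ 2 - 1) * (t ^ 2 + 1) = 0 := by linear_combination ht
  refine (mul_eq_zero.1 hprod).elim sub_eq_zero.1 fun h => ?_
  have h3 := FiniteField.isSquare_neg_one_iff.1 ⟨t, by linear_combination -h⟩
  have hchar : ringChar F = 2 := FiniteField.even_card_iff_char_two.2 (by lia)
  have htwo : (2 : F) = 0 := by exact_mod_cast hchar ▸ ringChar.Nat.cast_ringChar (R := F)
  linear_combination h - htwo

theorem card_projectiveSymplecticGroup_mul_card_center (l F : Type*) [Fintype l] [DecidableEq l]
    [CommRing F] :
    Nat.card (ProjectiveSymplecticGroup l F) *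
      Nat.card (Subgroup.center (symplecticGroup l F)) = Nat.card (symplecticGroup l F) :=
  (Subgroup.card_eq_card_quotient_mul_card_subgroup _).symm

theorem card_projectiveSpecialLinearGroup_mul_card_center (n F : Type*) [Fintype n] [DecidableEq n]
    [CommRing F] :
    Nat.card (ProjectiveSpecialLinearGroup n F) *
      Nat.card (Subgroup.center (SpecialLinearGroup n F)) = Nat.card (SpecialLinearGroup n F) :=
  (Subgroup.card_eq_card_quotient_mul_card_subgroup _).symm

section Field

variable {F : Type*} [Field F] [Finite F]

theorem card_projectiveSpecialLinearGroup_fin_four (hF : Nat.card F % 4 ≠ 1) :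
    Nat.card (ProjectiveSpecialLinearGroup (Fin 4) F) =
      Nat.card F ^ 2 * (Nat.card F ^ 3 - 1) * Nat.card (ProjectiveSymplecticGroup (Fin 2) F) := by
  have hcenter : Nat.card (Subgroup.center (symplecticGroup (Fin 2) F)) =
      Nat.card (Subgroup.center (SpecialLinearGroup (Fin 4) F)) := by
    rw [card_center_symplecticGroup fun t ht => sq_eq_one_of_pow_four_eq_one hF (by simpa using ht),
      card_center_specialLinearGroup, card_center_specialLinearGroup, Fintype.card_sum,
      Fintype.card_fin, Fintype.card_fin]
  refine Nat.eq_of_mul_eq_mul_right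
    (Nat.card_pos (α := Subgroup.center (SpecialLinearGroup (Fin 4) F))) ?_
  rw [card_projectiveSpecialLinearGroup_mul_card_center, card_specialLinearGroup_fin_four,
    ← card_projectiveSymplecticGroup_mul_card_center, hcenter, mul_assoc _ (Nat.card _)]

theorem index_mul_two_of_projectiveSymplecticGroup (hF : Nat.card F % 4 ≠ 1)
    {H : Subgroup (ProjectiveSpecialLinearGroup (Fin 4) F)} {N : Subgroup H} (hN : N.index = 2)
    (φ : N ≃* ProjectiveSymplecticGroup (Fin 2) F) :
    H.index * 2 = Nat.card F ^ 2 * (Nat.card F ^ 3 - 1) := by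
  refine Nat.eq_of_mul_eq_mul_right
    (Nat.card_pos (α := ProjectiveSymplecticGroup (Fin 2) F)) ?_
  rw [← card_projectiveSpecialLinearGroup_fin_four hF, ← H.card_mul_index, ← N.card_mul_index, hN,
    Nat.card_congr φ.toEquiv]
  ring

end Field

theorem odd_iff_of_mul_two_eq {q m : ℕ} (hq : q % 4 ≠ 1) (h : m * 2 = q ^ 2 * (q ^ 3 - 1)) :
    Odd m ↔ q % 4 = 3 := by
  have hmod : m * 2 % 4 = q % 4 * (q % 4) * ((q ^ 3 - 1) % 4) % 4 := by
    rw [h, sq, Nat.mul_mod, Nat.mul_mod q, Nat.mod_mul_mod]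
  have hcube : q ^ 3 % 4 = (q % 4) ^ 3 % 4 := Nat.pow_mod q 3 4
  rw [Nat.odd_iff]
  obtain h0 | h2 | h3 : q % 4 = 0 ∨ q % 4 = 2 ∨ q % 4 = 3 := by lia
  · simp only [h0] at hmod
    lia
  · simp only [h2] at hmod
    lia
  · simp only [h3] at hmod hcube
    lia

end OddIndex

section PrimeOrder

variable {n F : Type*} [Fintype n] [DecidableEq n] [Nonempty n] [Field F] [Finite F]
  {r : ℕ} [Fact r.Prime] (hn : orderOf (Nat.card F : ZMod r) = Fintype.card n)

include hn

theorem coprime_card_ker_projectiveSpecialLinearGroup :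
    r.Coprime
      (Nat.card (QuotientGroup.mk' (Subgroup.center (SpecialLinearGroup n F))).ker) := by
  rw [QuotientGroup.ker_mk', card_center_specialLinearGroup]
  have hlt : Fintype.card n < r := hn ▸ ZMod.orderOf_lt (Fact.out : r.Prime).one_lt _
  exact (Nat.coprime_of_lt_prime Fintype.card_ne_zero hlt Fact.out).coprime_dvd_right
    (Nat.gcd_dvd_right _ _)

theorem exists_specialLinearGroup_irreducible_minpoly {x : ProjectiveSpecialLinearGroup n F}
    (hx : x ^ r = 1) (hx1 : x ≠ 1) :
    ∃ y : SpecialLinearGroup n F, QuotientGroup.mk' _ y = x ∧ y ^ r = 1 ∧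
      Irreducible (minpoly F (y : Matrix n n F)) ∧
      (minpoly F (y : Matrix n n F)).natDegree = Fintype.card n := by
  obtain ⟨y, rfl, hy⟩ := exists_pow_eq_one_of_coprime_card_ker (QuotientGroup.mk'_surjective _)
    (coprime_card_ker_projectiveSpecialLinearGroup hn) hx
  have hy1 : (y : Matrix n n F) ≠ 1 := fun h =>
    hx1 (by rw [show y = 1 from Subtype.ext h, map_one])
  have hpow : (y : Matrix n n F) ^ r = 1 := congrArg Subtype.val hy
  exact ⟨y, rfl, hy, irreducible_minpoly_of_pow_prime_eq_one Fact.out hn hpow hy1⟩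

theorem ncard_commutingConjugates_projectiveSpecialLinearGroup_le
    {x : ProjectiveSpecialLinearGroup n F} (hx : x ^ r = 1) (hx1 : x ≠ 1) :
    (commutingConjugates x).ncard ≤ Fintype.card n := by
  obtain ⟨y, rfl, hy, hirr, hdeg⟩ := exists_specialLinearGroup_irreducible_minpoly hn hx hx1
  exact (ncard_commutingConjugates_map_le (QuotientGroup.ker_mk' _).le
    (coprime_card_ker_projectiveSpecialLinearGroup hn)
    (QuotientGroup.mk'_surjective _) hy).trans
    (ncard_commutingConjugates_specialLinearGroup_le hirr hdeg)

theorem card_centralizer_projectiveSpecialLinearGroup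
    {x : ProjectiveSpecialLinearGroup n F} (hx : x ^ r = 1) (hx1 : x ≠ 1) :
    Nat.card (Subgroup.centralizer {x}) * (Nat.card F - 1).gcd (Fintype.card n) =
      ∑ i ∈ Finset.range (Fintype.card n), Nat.card F ^ i := by
  obtain ⟨y, rfl, hy, hirr, hdeg⟩ := exists_specialLinearGroup_irreducible_minpoly hn hx hx1
  rw [← card_centralizer_specialLinearGroup hirr hdeg, ← card_center_specialLinearGroup,
    ← card_centralizer_map_mul_card_ker (QuotientGroup.ker_mk' _).le
      (coprime_card_ker_projectiveSpecialLinearGroup hn)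
      (QuotientGroup.mk'_surjective _) hy, QuotientGroup.ker_mk']

end PrimeOrder

section SymplecticPrimeOrder

theorem sq_sub_one_sq_mul_pow_modEq_four {q r : ℕ} (hr : r ∣ q ^ 2 + 1) :
    (q ^ 2 - 1) ^ 2 * q ^ 4 ≡ 4 [MOD r] := by
  obtain rfl | hq := q.eq_zero_or_pos
  · rw [Nat.dvd_one.1 hr]
    exact Nat.modEq_one
  have hsq : (q : ZMod r) ^ 2 = -1 := by
    rw [eq_neg_iff_add_eq_zero]
    exact_mod_cast (ZMod.natCast_eq_zero_iff _ _).2 hr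
  rw [← ZMod.natCast_eq_natCast_iff, Nat.cast_mul, Nat.cast_pow,
    Nat.cast_pred (pow_pos hq 2), Nat.cast_pow, Nat.cast_pow, hsq, pow_mul (q : ZMod r) 2 2, hsq]
  norm_num

variable {F : Type*} [Field F] [Finite F] {r : ℕ} [Fact r.Prime]

variable (F) in
theorem card_symplecticGroup_fin_two :
    Nat.card (symplecticGroup (Fin 2) F) =
      (Nat.card F ^ 2 + 1) * ((Nat.card F ^ 2 - 1) ^ 2 * Nat.card F ^ 4) := by
  have hfactor : Nat.card F ^ 4 - 1 = (Nat.card F ^ 2 + 1) * (Nat.card F ^ 2 - 1) := by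
    rw [← Nat.sq_sub_sq, ← pow_mul]
  rw [card_symplecticGroup, Fintype.card_fin, Finset.prod_range_succ, Finset.prod_range_one]
  simp only [zero_add, mul_zero, mul_one, pow_one, Nat.reduceAdd, Nat.reduceMul, hfactor]
  ring

theorem index_centralizer_symplecticGroup_fin_two (hr2 : r ≠ 2) (hr : r ∣ Nat.card F ^ 2 + 1)
    {y : symplecticGroup (Fin 2) F} (hy : y ^ r = 1) (hy1 : y ≠ 1) :
    (Subgroup.centralizer {y}).index = (Nat.card F ^ 2 - 1) ^ 2 * Nat.card F ^ 4 := by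
  have hpow : y ^ (Nat.card F ^ Fintype.card (Fin 2) + 1) = 1 := by
    rw [← orderOf_dvd_iff_pow_eq_one, Fintype.card_fin]
    exact (orderOf_dvd_of_pow_eq_one hy).trans hr
  obtain ⟨hirr, hdeg⟩ := irreducible_minpoly_of_pow_prime_eq_one (n := Fin 2 ⊕ Fin 2) Fact.out
    (orderOf_natCast_eq_four Fact.out hr2 hr) (congrArg Subtype.val hy)
    (fun h => hy1 (Subtype.ext h))
  have hcard := (Subgroup.centralizer {y}).card_mul_index
  rw [card_centralizer_symplecticGroup hirr hdeg hpow, card_symplecticGroup_fin_two] at hcard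
  exact Nat.eq_of_mul_eq_mul_left (Nat.succ_pos (Nat.card F ^ 2)) hcard

theorem coprime_card_ker_projectiveSymplecticGroup {l : Type*} [Fintype l] [DecidableEq l]
    [Nonempty l] (hn : orderOf (Nat.card F : ZMod r) = Fintype.card (l ⊕ l)) :
    r.Coprime (Nat.card (QuotientGroup.mk' (Subgroup.center (symplecticGroup l F))).ker) := by
  have h := coprime_card_ker_projectiveSpecialLinearGroup hn
  rw [QuotientGroup.ker_mk'] at h ⊢
  exact h.coprime_dvd_right card_center_symplecticGroup_dvd

theorem exists_projectiveSymplecticGroup_index_centralizer_modEq (hr2 : r ≠ 2)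
    (hr : r ∣ Nat.card F ^ 2 + 1) :
    ∃ x : ProjectiveSymplecticGroup (Fin 2) F, x ^ r = 1 ∧ x ≠ 1 ∧
      (Subgroup.centralizer {x}).index ≡ 4 [MOD r] := by
  have hcoprime := coprime_card_ker_projectiveSymplecticGroup (F := F) (l := Fin 2)
    (orderOf_natCast_eq_four Fact.out hr2 hr)
  have hdvd : r ∣ Nat.card (ProjectiveSymplecticGroup (Fin 2) F) := by
    refine (QuotientGroup.ker_mk' (Subgroup.center (symplecticGroup (Fin 2) F)) ▸
      hcoprime).dvd_of_dvd_mul_right ?_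
    rw [card_projectiveSymplecticGroup_mul_card_center, card_symplecticGroup_fin_two]
    exact hr.mul_right _
  obtain ⟨x, hx⟩ := exists_prime_orderOf_dvd_card' r hdvd
  have hx1 : x ≠ 1 := orderOf_eq_one_iff.not.1 (hx ▸ (Fact.out : r.Prime).ne_one)
  have hpow : x ^ r = 1 := hx ▸ pow_orderOf_eq_one x
  obtain ⟨y, rfl, hy⟩ := exists_pow_eq_one_of_coprime_card_ker (QuotientGroup.mk'_surjective _)
    hcoprime hpow
  have hy1 : y ≠ 1 := fun h => hx1 (by rw [h, map_one])
  refine ⟨_, hpow, hx1, ?_⟩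
  rw [index_centralizer_map_of_pow_eq_one (QuotientGroup.ker_mk' _).le hcoprime
    (QuotientGroup.mk'_surjective _) hy, index_centralizer_symplecticGroup_fin_two hr2 hr hy hy1]
  exact sq_sub_one_sq_mul_pow_modEq_four hr

end SymplecticPrimeOrder

section Impossibility

theorem odd_of_mul_four_eq_sum {q c : ℕ} (hq : q % 4 = 1)
    (h : c * 4 = ∑ i ∈ Finset.range 4, q ^ i) : Odd c := by
  obtain ⟨k, rfl⟩ : ∃ k, q = 4 * k + 1 := ⟨q / 4, by lia⟩
  refine ⟨8 * k ^ 3 + 8 * k ^ 2 + 3 * k, Nat.eq_of_mul_eq_mul_right four_pos (h.trans ?_)⟩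
  simp only [Finset.sum_range_succ, Finset.sum_range_zero]
  ring

variable {F : Type*} [Field F] [Finite F] (hF : Nat.card F % 4 = 1)
  {H : Subgroup (ProjectiveSpecialLinearGroup (Fin 4) F)} {N : Subgroup H} (hN : N.index = 2)

include hF

theorem odd_card_centralizer_projectiveSpecialLinearGroup_fin_four {r : ℕ} [Fact r.Prime]
    (hr2 : r ≠ 2) (hr : r ∣ Nat.card F ^ 2 + 1) {x : ProjectiveSpecialLinearGroup (Fin 4) F}
    (hx : x ^ r = 1) (hx1 : x ≠ 1) : Odd (Nat.card (Subgroup.centralizer {x})) := by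
  have hgcd : (Nat.card F - 1).gcd 4 = 4 := Nat.gcd_eq_right (by lia)
  have hcard := card_centralizer_projectiveSpecialLinearGroup (n := Fin 4)
    (orderOf_natCast_eq_four Fact.out hr2 hr) hx hx1
  rw [Fintype.card_fin, hgcd] at hcard
  exact odd_of_mul_four_eq_sum hF hcard

include hN

theorem not_index_centralizer_modEq_four {r : ℕ} [Fact r.Prime] (hr2 : r ≠ 2)
    (hr : r ∣ Nat.card F ^ 2 + 1) {x : N} (hx : x ^ r = 1) (hx1 : x ≠ 1) :
    ¬ (Subgroup.centralizer {x}).index ≡ 4 [MOD r] := by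
  have hord := orderOf_natCast_eq_four Fact.out hr2 hr
  have hpow : ((x : H) : ProjectiveSpecialLinearGroup (Fin 4) F) ^ r = 1 := by exact_mod_cast hx
  have hne : ((x : H) : ProjectiveSpecialLinearGroup (Fin 4) F) ≠ 1 := by exact_mod_cast hx1
  have hodd : Odd (Nat.card (Subgroup.centralizer {(x : H)})) :=
    (odd_card_centralizer_projectiveSpecialLinearGroup_fin_four hF hr2 hr hpow hne).of_dvd_nat
      (card_centralizer_dvd_of_injective H.subtype_injective _)
  have hle : (commutingConjugates (x : H)).ncard ≤ 4 :=
    (ncard_commutingConjugates_le_of_injective H.subtype_injective _).trans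
      (ncard_commutingConjugates_projectiveSpecialLinearGroup_le (n := Fin 4) hord hpow hne)
  have hpgroup : IsPGroup r (Subgroup.zpowers x) := IsPGroup.of_card (n := 1) <| by
    rw [Nat.card_zpowers, pow_one, orderOf_eq_prime hx hx1]
  exact not_index_centralizer_modEq_of_index_eq_two hN four_pos
    (hord ▸ ZMod.orderOf_lt (Fact.out : r.Prime).one_lt _) hpgroup hodd hle

theorem not_nonempty_mulEquiv_projectiveSymplecticGroup :
    ¬ Nonempty (N ≃* ProjectiveSymplecticGroup (Fin 2) F) := by
  rintro ⟨φ⟩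
  obtain ⟨r, hr, hr2, hrq⟩ := exists_odd_prime_dvd_sq_add_one
    (Nat.odd_iff.2 (by lia)) (Finite.one_lt_card (α := F)).ne'
  have := Fact.mk hr
  obtain ⟨x, hx, hx1, hindex⟩ :=
    exists_projectiveSymplecticGroup_index_centralizer_modEq (F := F) hr2 hrq
  refine not_index_centralizer_modEq_four hF hN hr2 hrq (x := φ.symm x)
    (by rw [← map_pow, hx, map_one]) (by simpa using hx1) ?_
  rwa [index_centralizer_mulEquiv]

end Impossibility

section SpecialLinearTransvection

variable {n F : Type*} [Fintype n] [DecidableEq n] [Field F]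

theorem diag2n_eq_prod_transvection {i j : n} (hij : i ≠ j) {c : F} (hc : c ≠ 0) :
    Matrix.SpecialLinearGroup.diag2n hij c hc =
      Matrix.SpecialLinearGroup.transvection hij c *
        Matrix.SpecialLinearGroup.transvection hij.symm (-c⁻¹) *
        Matrix.SpecialLinearGroup.transvection hij c *
        (Matrix.SpecialLinearGroup.transvection hij (-1) *
          Matrix.SpecialLinearGroup.transvection hij.symm 1 *
          Matrix.SpecialLinearGroup.transvection hij (-1)) := by
  apply Subtype.ext
  have hdiag : (Matrix.SpecialLinearGroup.diag2n hij c hc).1 =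
      1 + single i i (c - 1) + single j j (c⁻¹ - 1) := by
    rw [Matrix.SpecialLinearGroup.diag2n_coe]
    ext k m
    simp only [diagonal_apply, Matrix.add_apply, one_apply, single_apply]
    split_ifs <;> grind
  simp only [Matrix.SpecialLinearGroup.coe_mul, Matrix.SpecialLinearGroup.transvection_coe, hdiag,
    mul_add, add_mul, mul_one, one_mul, single_mul_single_same,
    single_mul_single_of_ne _ _ _ _ hij, single_mul_single_of_ne _ _ _ _ hij.symm, add_zero]
  ext k m
  simp only [Matrix.add_apply, one_apply, single_apply]
  split_ifs <;> grind

theorem eq_top_of_transvection_mem [Nontrivial n] {K : Subgroup (SpecialLinearGroup n F)}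
    (h : ∀ (i j : n) (hij : i ≠ j) (c : F), Matrix.SpecialLinearGroup.transvection hij c ∈ K) :
    K = ⊤ := by
  refine eq_top_iff.2 fun A _ =>
    Matrix.SpecialLinearGroup.diagonal_transvection_induction' (· ∈ K) A
      (fun i j hij c hc => ?_) h fun _ _ => K.mul_mem
  rw [diag2n_eq_prod_transvection]
  exact K.mul_mem (K.mul_mem (K.mul_mem (h _ _ _ _) (h _ _ _ _)) (h _ _ _ _))
    (K.mul_mem (K.mul_mem (h _ _ _ _) (h _ _ _ _)) (h _ _ _ _))

end SpecialLinearTransvection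

section FormTransvection

variable {l F : Type*} [Fintype l] [DecidableEq l] [Field F]

theorem formTransvection_mul_formTransvection {v w : l ⊕ l → F} (h : symplecticForm l F w v = 0)
    (w' : l ⊕ l → F) :
    formTransvection v w * formTransvection v w' = formTransvection v (w + w') := by
  refine Matrix.ext_of_mulVec_single fun i => ?_
  simp only [← mulVec_mulVec, formTransvection_mulVec, map_add, map_smul, h, LinearMap.add_apply,
    add_smul, smul_zero, add_zero]
  abel

theorem mul_formTransvection_mul {A B : Matrix (l ⊕ l) (l ⊕ l) F} (hAB : A * B = 1)
    (v w : l ⊕ l → F) :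
    A * formTransvection v w * B =
      formTransvection (A *ᵥ v) (symplecticAdjoint l F B *ᵥ w) := by
  refine Matrix.ext_of_mulVec_single fun i => ?_
  simp only [← mulVec_mulVec, formTransvection_mulVec, mulVec_add, mulVec_smul,
    symplecticForm_symplecticAdjoint]
  rw [mulVec_mulVec, hAB, one_mulVec]

theorem transvection_eq_formTransvection (i j : l ⊕ l) (c : F) :
    Matrix.transvection i j c =
      formTransvection (Pi.single i 1) (Pi.single j c ᵥ* -J l F) := by
  rw [formTransvection, vecMul_vecMul, Matrix.neg_mul, J_squared, neg_neg, vecMul_one,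
    Matrix.transvection]
  congr 1
  ext a b
  simp only [vecMulVec_apply, single_apply, Pi.single_apply]
  grind

theorem symplecticForm_single_vecMul_neg_J {i j : l ⊕ l} (hij : i ≠ j) (c : F) :
    symplecticForm l F (Pi.single j c ᵥ* -J l F) (Pi.single i 1) = 0 := by
  rw [symplecticForm_apply, dotProduct_mulVec, vecMul_vecMul, Matrix.neg_mul, J_squared, neg_neg,
    vecMul_one, dotProduct_single_one, Pi.single_eq_of_ne hij]

theorem exists_symplecticForm_eq_zero_and_ne_zero {v w : l ⊕ l → F} (hv : v ≠ 0)
    (hw : ∀ t : F, w ≠ t • v) :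
    ∃ u, symplecticForm l F u v = 0 ∧ symplecticForm l F u w ≠ 0 := by
  by_contra! h
  obtain ⟨z, hz⟩ := exists_symplecticForm_eq_one hv
  refine hw (symplecticForm l F w z) (sub_eq_zero.1 ?_)
  by_contra hne
  obtain ⟨x, hx⟩ := exists_symplecticForm_eq_one hne
  have horth : symplecticForm l F (x - symplecticForm l F v x • z) v = 0 := by
    rw [symplecticForm_swap]
    simp [hz]
  have hxw := h _ horth
  rw [symplecticForm_swap] at hxw
  simp only [map_sub, map_smul, smul_eq_mul, neg_eq_zero, LinearMap.sub_apply,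
    LinearMap.smul_apply] at hxw hx
  exact zero_ne_one (by linear_combination hx - hxw)

theorem exists_symplecticForm_ne_zero_and_ne_zero {v w : l ⊕ l → F} (hv : v ≠ 0) (hw : w ≠ 0) :
    ∃ u, symplecticForm l F v u ≠ 0 ∧ symplecticForm l F w u ≠ 0 := by
  obtain ⟨a, ha⟩ := exists_symplecticForm_eq_one hv
  obtain ⟨b, hb⟩ := exists_symplecticForm_eq_one hw
  by_cases hwa : symplecticForm l F w a = 0
  · by_cases hvb : symplecticForm l F v b = 0
    · exact ⟨a + b, by simp [ha, hvb], by simp [hwa, hb]⟩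
    · exact ⟨b, hvb, by simp [hb]⟩
  · exact ⟨a, by simp [ha], hwa⟩

theorem exists_mem_symplecticGroup_mulVec_eq {v w : l ⊕ l → F} (hv : v ≠ 0) (hw : w ≠ 0) :
    ∃ S ∈ symplecticGroup l F, S *ᵥ v = w := by
  have hstep (a b : l ⊕ l → F) (hab : symplecticForm l F b a ≠ 0) :
      ∃ S ∈ symplecticGroup l F, S *ᵥ a = b := by
    refine ⟨_, formTransvection_smul_mem_symplecticGroup (b - a) (symplecticForm l F b a)⁻¹, ?_⟩
    rw [formTransvection_mulVec]
    simp [symplecticForm_self, hab]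
  obtain ⟨u, hvu, hwu⟩ := exists_symplecticForm_ne_zero_and_ne_zero hv hw
  have huv : symplecticForm l F u v ≠ 0 := by
    rwa [symplecticForm_swap, neg_ne_zero]
  obtain ⟨S, hS, rfl⟩ := hstep v u huv
  obtain ⟨T, hT, rfl⟩ := hstep _ w hwu
  exact ⟨T * S, mul_mem hT hS, (mulVec_mulVec _ _ _).symm⟩

end FormTransvection

section Overgroup

variable {l F : Type*} [Fintype l] [DecidableEq l] [Field F]
  {M : Submonoid (Matrix (l ⊕ l) (l ⊕ l) F)}

theorem formTransvection_mulVec_mem (hM : symplecticGroup l F ≤ M)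
    {S : Matrix (l ⊕ l) (l ⊕ l) F} (hS : S ∈ symplecticGroup l F) {v w : l ⊕ l → F}
    (h : formTransvection v w ∈ M) : formTransvection (S *ᵥ v) (S *ᵥ w) ∈ M := by
  obtain ⟨S', hS', hSS'⟩ : ∃ S' ∈ symplecticGroup l F, S * S' = 1 :=
    ⟨_, (⟨S, hS⟩⁻¹ : symplecticGroup l F).2, congrArg Subtype.val (mul_inv_cancel ⟨S, hS⟩)⟩
  have hadj : symplecticAdjoint l F S' = S :=
    left_inv_eq_right_inv (mem_symplecticGroup_iff_symplecticAdjoint_mul.1 hS')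
      (mul_eq_one_comm.1 hSS')
  have hconj := mul_formTransvection_mul hSS' v w
  rw [hadj] at hconj
  exact hconj ▸ M.mul_mem (M.mul_mem (hM hS) h) (hM hS')

/-- Conjugating by a symplectic transvection along `u` turns `w` into `w + u`. -/
theorem formTransvection_mem_of_symplecticForm_ne_zero (hM : symplecticGroup l F ≤ M)
    {v w u : l ⊕ l → F} (hwv : symplecticForm l F w v = 0) (h : formTransvection v w ∈ M)
    (h' : formTransvection v (-w) ∈ M) (huv : symplecticForm l F u v = 0)
    (huw : symplecticForm l F u w ≠ 0) : formTransvection v u ∈ M := by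
  have hconj := formTransvection_mulVec_mem hM
    (formTransvection_smul_mem_symplecticGroup u (symplecticForm l F u w)⁻¹) h
  simp only [formTransvection_mulVec, map_smul, LinearMap.smul_apply, huv, smul_eq_mul, mul_zero,
    zero_smul, add_zero, inv_mul_cancel₀ huw, one_smul] at hconj
  have hmul := M.mul_mem h' hconj
  rwa [formTransvection_mul_formTransvection (by simp [hwv]), neg_add_cancel_left] at hmul

theorem formTransvection_mem_of_symplecticForm_eq_zero (hM : symplecticGroup l F ≤ M)
    {v w u : l ⊕ l → F} (hv : v ≠ 0) (hw : ∀ t : F, w ≠ t • v)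
    (hwv : symplecticForm l F w v = 0) (h : formTransvection v w ∈ M)
    (h' : formTransvection v (-w) ∈ M) (huv : symplecticForm l F u v = 0) :
    formTransvection v u ∈ M := by
  by_cases huw : symplecticForm l F u w = 0
  · obtain ⟨u₀, hu₀v, hu₀w⟩ := exists_symplecticForm_eq_zero_and_ne_zero hv hw
    have hadd := formTransvection_mem_of_symplecticForm_ne_zero hM hwv h h' (u := u + u₀)
      (by simp [huv, hu₀v]) (by simpa [huw] using hu₀w)
    have hneg := formTransvection_mem_of_symplecticForm_ne_zero hM hwv h h' (u := -u₀)
      (by simp [hu₀v]) (by simpa using hu₀w)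
    have hmul := M.mul_mem hadd hneg
    rwa [formTransvection_mul_formTransvection (by simp [huv, hu₀v]), add_neg_cancel_right] at hmul
  · exact formTransvection_mem_of_symplecticForm_ne_zero hM hwv h h' huv huw

theorem formTransvection_mem_of_formTransvection_mem (hM : symplecticGroup l F ≤ M)
    {v w : l ⊕ l → F} (hv : v ≠ 0) (hw : ∀ t : F, w ≠ t • v)
    (hwv : symplecticForm l F w v = 0) (h : formTransvection v w ∈ M)
    (h' : formTransvection v (-w) ∈ M) {v' w' : l ⊕ l → F} (hv' : v' ≠ 0)
    (hwv' : symplecticForm l F w' v' = 0) : formTransvection v' w' ∈ M := by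
  obtain ⟨S, hS, rfl⟩ := exists_mem_symplecticGroup_mulVec_eq hv hv'
  have hw' : w' = S *ᵥ (symplecticAdjoint l F S *ᵥ w') := by
    rw [mulVec_mulVec, mul_eq_one_comm.1 (mem_symplecticGroup_iff_symplecticAdjoint_mul.1 hS),
      one_mulVec]
  rw [hw']
  refine formTransvection_mulVec_mem hM hS
    (formTransvection_mem_of_symplecticForm_eq_zero hM hv hw hwv h h' ?_)
  rw [symplecticForm_symplecticAdjoint, hwv']

end Overgroup

section Similitudes

theorem det_symplecticAdjoint {l R : Type*} [Fintype l] [DecidableEq l] [CommRing R]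
    (A : Matrix (l ⊕ l) (l ⊕ l) R) : (symplecticAdjoint l R A).det = A.det := by
  have hJ : (J l R).det * (-J l R).det = 1 := by
    rw [← det_mul, Matrix.mul_neg, J_squared, neg_neg, det_one]
  rw [symplecticAdjoint_apply, ← Matrix.mul_neg, det_mul, det_mul, det_transpose]
  linear_combination A.det * hJ

variable {l F : Type*} [Fintype l] [DecidableEq l] [Field F]

theorem symplecticAdjoint_mul_mul_eq_smul {A B : Matrix (l ⊕ l) (l ⊕ l) F} {ε : F}
    (hA : symplecticAdjoint l F A * A = ε • 1) :
    symplecticAdjoint l F (A * B) * (A * B) = ε • (symplecticAdjoint l F B * B) := by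
  rw [symplecticAdjoint_mul, Matrix.mul_assoc, ← Matrix.mul_assoc _ A, hA, smul_mul, one_mul,
    Matrix.mul_smul]

variable (l F) in
/-- The group of linear maps of determinant one that multiply the symplectic form by a scalar,
namely the `ε` with `adjoint g * g = ε`. -/
def specialSimilitudeGroup : Subgroup (SpecialLinearGroup (l ⊕ l) F) where
  carrier := {g | ∃ ε : F, symplecticAdjoint l F g * (g : Matrix _ _ F) = ε • 1}
  one_mem' := ⟨1, by simp [symplecticAdjoint_one]⟩
  mul_mem' := by
    rintro g h ⟨ε, hg⟩ ⟨δ, hh⟩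
    exact ⟨ε * δ, by
      rw [Matrix.SpecialLinearGroup.coe_mul, symplecticAdjoint_mul_mul_eq_smul hg, hh, smul_smul]⟩
  inv_mem' := by
    rintro g ⟨ε, hg⟩
    have h := symplecticAdjoint_mul_mul_eq_smul (B := ↑g⁻¹) hg
    rw [← Matrix.SpecialLinearGroup.coe_mul, mul_inv_cancel, Matrix.SpecialLinearGroup.coe_one,
      symplecticAdjoint_one, one_mul] at h
    obtain rfl | hε := eq_or_ne ε 0
    · exact ⟨0, by rw [zero_smul, ← mul_one (_ * _), h, zero_smul, mul_zero]⟩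
    · exact ⟨ε⁻¹, by rw [h, inv_smul_smul₀ hε]⟩

theorem range_symplecticToSL_le_specialSimilitudeGroup :
    (symplecticToSL l F).range ≤ specialSimilitudeGroup l F := fun g hg => ⟨1, by
  rw [one_smul, ← mem_symplecticGroup_iff_symplecticAdjoint_mul, ← mem_range_symplecticToSL]
  exact hg⟩

theorem mem_range_symplecticToSL_iff_eq_one [Nonempty l] {g : SpecialLinearGroup (l ⊕ l) F} {ε : F}
    (hg : symplecticAdjoint l F g * (g : Matrix _ _ F) = ε • 1) :
    g ∈ (symplecticToSL l F).range ↔ ε = 1 := by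
  rw [mem_range_symplecticToSL, mem_symplecticGroup_iff_symplecticAdjoint_mul, hg,
    smul_one_eq_diagonal, diagonal_eq_one]
  exact ⟨fun h => congrFun h (.inl (Classical.arbitrary l)), fun h => funext fun _ => h⟩

theorem pow_card_eq_one_of_symplecticAdjoint_mul_eq {g : SpecialLinearGroup (l ⊕ l) F} {ε : F}
    (hg : symplecticAdjoint l F g * (g : Matrix _ _ F) = ε • 1) :
    ε ^ Fintype.card (l ⊕ l) = 1 := by
  simpa [det_symplecticAdjoint] using (congrArg det hg).symm

theorem exists_symplecticAdjoint_mul_eq_neg_one (hl : Even (Fintype.card l)) :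
    ∃ g : SpecialLinearGroup (l ⊕ l) F,
      symplecticAdjoint l F g * (g : Matrix _ _ F) = (-1 : F) • 1 := by
  refine ⟨⟨fromBlocks 1 0 0 (-1), ?_⟩, ?_⟩
  · rw [det_fromBlocks_zero₂₁, det_neg, hl.neg_one_pow, det_one, one_mul, mul_one]
  · simp [symplecticAdjoint_apply, J, fromBlocks_transpose, fromBlocks_multiply, fromBlocks_neg,
      ← fromBlocks_one]

theorem relIndex_range_symplecticToSL_specialSimilitudeGroup [Nonempty l]
    (hl : Even (Fintype.card l)) (h2 : (2 : F) ≠ 0)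
    (hroot : ∀ t : F, t ^ Fintype.card (l ⊕ l) = 1 → t ^ 2 = 1) :
    (symplecticToSL l F).range.relIndex (specialSimilitudeGroup l F) = 2 := by
  obtain ⟨a, ha⟩ := exists_symplecticAdjoint_mul_eq_neg_one (F := F) hl
  refine Subgroup.relIndex_eq_two_iff.2 ⟨a, ⟨-1, ha⟩, fun b ⟨ε, hb⟩ => ?_⟩
  have hba : symplecticAdjoint l F ↑(b * a) * (↑(b * a) : Matrix _ _ F) = (-ε) • 1 := by
    rw [Matrix.SpecialLinearGroup.coe_mul, symplecticAdjoint_mul_mul_eq_smul hb, ha, smul_smul,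
      mul_neg_one]
  have hne : (-1 : F) ≠ 1 := fun h => h2 (by linear_combination -h)
  rw [mem_range_symplecticToSL_iff_eq_one hba, mem_range_symplecticToSL_iff_eq_one hb]
  have hsq := hroot ε (pow_card_eq_one_of_symplecticAdjoint_mul_eq hb)
  obtain rfl | rfl := sq_eq_one_iff.1 hsq <;> simp [Xor, hne]

end Similitudes

section Maximality

variable {l F : Type*} [Fintype l] [DecidableEq l] [Field F]

theorem eq_top_of_not_le_specialSimilitudeGroup [Nonempty l]
    {K : Subgroup (SpecialLinearGroup (l ⊕ l) F)} (hK : (symplecticToSL l F).range ≤ K)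
    (hK' : ¬ K ≤ specialSimilitudeGroup l F) : K = ⊤ := by
  obtain ⟨g, hgK, hg⟩ := SetLike.not_le_iff_exists.1 hK'
  obtain ⟨u, hu, hut⟩ : ∃ u, u ≠ 0 ∧
      ∀ t : F, (symplecticAdjoint l F g * (g : Matrix _ _ F)) *ᵥ u ≠ t • u := by
    by_contra! h
    exact hg (exists_eq_smul_one_of_forall_mulVec h)
  set M : Submonoid (Matrix (l ⊕ l) (l ⊕ l) F) :=
    K.toSubmonoid.map Matrix.SpecialLinearGroup.coeMonoidHom
  have hmem {h : SpecialLinearGroup (l ⊕ l) F} : (h : Matrix (l ⊕ l) (l ⊕ l) F) ∈ M ↔ h ∈ K :=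
    Submonoid.mem_map_iff_mem Matrix.SpecialLinearGroup.coeMonoidHom_injective
  have hM : symplecticGroup l F ≤ M := fun A hA =>
    hmem.2 (hK ⟨⟨A, hA⟩, rfl⟩ : symplecticToSL l F ⟨A, hA⟩ ∈ K)
  have hinv : (↑g⁻¹ : Matrix (l ⊕ l) (l ⊕ l) F) * (g : Matrix (l ⊕ l) (l ⊕ l) F) = 1 :=
    congrArg Subtype.val (inv_mul_cancel g)
  have hconj (c : F) : formTransvection u
      (c • (symplecticAdjoint l F g * (g : Matrix (l ⊕ l) (l ⊕ l) F)) *ᵥ u) ∈ M := by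
    have h := mul_formTransvection_mul hinv ((g : Matrix _ _ F) *ᵥ u) (c • (g : Matrix _ _ F) *ᵥ u)
    rw [mulVec_mulVec, hinv, one_mulVec, mulVec_smul, mulVec_mulVec] at h
    rw [← h]
    exact M.mul_mem (M.mul_mem (hmem.2 (K.inv_mem hgK))
      (hM (formTransvection_smul_mem_symplecticGroup _ c))) (hmem.2 hgK)
  have : Nontrivial (l ⊕ l) :=
    let i := Classical.arbitrary l
    ⟨.inl i, .inr i, Sum.inl_ne_inr⟩
  refine eq_top_of_transvection_mem fun i j hij c => hmem.1 ?_
  change Matrix.transvection i j c ∈ M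
  rw [transvection_eq_formTransvection]
  refine formTransvection_mem_of_formTransvection_mem hM hu hut ?_ (by simpa using hconj 1)
    (by simpa using hconj (-1)) (by simp) (symplecticForm_single_vecMul_neg_J hij c)
  rw [← mulVec_mulVec, symplecticForm_symplecticAdjoint, symplecticForm_self]

end Maximality

theorem specialSimilitudeGroup_ne_top {l F : Type*} [Fintype l] [DecidableEq l] [Field F]
    [Nontrivial l] : specialSimilitudeGroup l F ≠ ⊤ := by
  intro htop
  obtain ⟨i, j, hij⟩ := exists_pair_ne l
  obtain ⟨ε, hε⟩ : Matrix.SpecialLinearGroup.transvection (Sum.inl_injective.ne hij) 1 ∈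
    specialSimilitudeGroup l F := htop ▸ Subgroup.mem_top _
  have h := congrArg (fun A => symplecticForm l F (A *ᵥ Pi.single (.inl j) 1)
    (Pi.single (.inr i) 1)) hε
  simp only [← mulVec_mulVec, symplecticForm_symplecticAdjoint, smul_mulVec, one_mulVec,
    Matrix.SpecialLinearGroup.transvection_coe, add_mulVec, single_mulVec_eq, map_add, map_smul,
    LinearMap.add_apply, LinearMap.smul_apply, symplecticForm_single] at h
  simp [J, hij.symm] at h

theorem isCoatom_specialSimilitudeGroup {l F : Type*} [Fintype l] [DecidableEq l] [Field F]
    [Nontrivial l] : IsCoatom (specialSimilitudeGroup l F) :=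
  ⟨specialSimilitudeGroup_ne_top, fun _ hK => eq_top_of_not_le_specialSimilitudeGroup
    (range_symplecticToSL_le_specialSimilitudeGroup.trans hK.le) hK.not_ge⟩

section Projective

theorem isCoatom_map_of_surjective {G Q : Type*} [Group G] [Group Q] {f : G →* Q}
    (hf : Function.Surjective f) {S : Subgroup G} (hker : f.ker ≤ S) (hS : IsCoatom S) :
    IsCoatom (S.map f) := by
  refine ⟨fun htop => hS.1 ?_, fun K hK => ?_⟩
  · rw [← Subgroup.comap_map_eq_self hker, htop, Subgroup.comap_top]
  · rw [← Subgroup.map_comap_eq_self_of_surjective hf K,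
      hS.2 _ ((Subgroup.comap_map_eq_self hker).symm.trans_lt
        ((Subgroup.comap_lt_comap_of_surjective hf).2 hK)),
      Subgroup.map_top_of_surjective _ hf]

section Reindex

variable {m n : Type*} [Fintype m] [DecidableEq m] [Fintype n] [DecidableEq n]
  (F : Type*) [Field F]

/-- The isomorphism between special linear groups given by renaming the indices. -/
def specialLinearGroupReindex (e : m ≃ n) : SpecialLinearGroup m F ≃* SpecialLinearGroup n F where
  toFun A := ⟨reindexAlgEquiv F F e A, by rw [det_reindexAlgEquiv, A.2]⟩
  invFun A := ⟨reindexAlgEquiv F F e.symm A, by rw [det_reindexAlgEquiv, A.2]⟩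
  left_inv A := Subtype.ext ((reindexAlgEquiv F F e).symm_apply_apply _)
  right_inv A := Subtype.ext ((reindexAlgEquiv F F e).apply_symm_apply _)
  map_mul' A B := Subtype.ext (map_mul (reindexAlgEquiv F F e) _ _)

/-- The projection of a special linear group onto the projective special linear group, with the
indices renamed along `e`. -/
def specialLinearToPSL (e : m ≃ n) : SpecialLinearGroup m F →* ProjectiveSpecialLinearGroup n F :=
  (QuotientGroup.mk' _).comp (specialLinearGroupReindex F e).toMonoidHom

variable {F}

theorem specialLinearToPSL_surjective (e : m ≃ n) :
    Function.Surjective (specialLinearToPSL F e) :=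
  (QuotientGroup.mk'_surjective _).comp (specialLinearGroupReindex F e).surjective

theorem ker_specialLinearToPSL (e : m ≃ n) :
    (specialLinearToPSL F e).ker = Subgroup.center (SpecialLinearGroup m F) := by
  ext g
  rw [specialLinearToPSL, MonoidHom.mem_ker, MonoidHom.comp_apply, ← MonoidHom.mem_ker,
    QuotientGroup.ker_mk']
  exact MulEquivClass.apply_mem_center_iff (specialLinearGroupReindex F e)

end Reindex

variable {l n F : Type*} [Fintype l] [DecidableEq l] [Fintype n] [DecidableEq n] [Field F]

theorem center_le_specialSimilitudeGroup :
    Subgroup.center (SpecialLinearGroup (l ⊕ l) F) ≤ specialSimilitudeGroup l F := fun g hg => by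
  obtain ⟨t, ht⟩ := mem_center_specialLinearGroup_iff_exists_smul_one.1 hg
  exact ⟨t * t, by rw [ht, map_smul, symplecticAdjoint_one, smul_mul_smul, one_mul]⟩

theorem isCoatom_map_specialSimilitudeGroup [Nontrivial l] (e : l ⊕ l ≃ n) :
    IsCoatom ((specialSimilitudeGroup l F).map (specialLinearToPSL F e)) :=
  isCoatom_map_of_surjective (specialLinearToPSL_surjective e)
    ((ker_specialLinearToPSL e).trans_le center_le_specialSimilitudeGroup)
    isCoatom_specialSimilitudeGroup

theorem relIndex_map_range_symplecticToSL [Nonempty l] (hl : Even (Fintype.card l))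
    (h2 : (2 : F) ≠ 0) (hroot : ∀ t : F, t ^ Fintype.card (l ⊕ l) = 1 → t ^ 2 = 1)
    (e : l ⊕ l ≃ n) :
    ((symplecticToSL l F).range.map (specialLinearToPSL F e)).relIndex
      ((specialSimilitudeGroup l F).map (specialLinearToPSL F e)) = 2 := by
  rw [Subgroup.relIndex_map_map, ker_specialLinearToPSL,
    sup_eq_left.2 (center_le_range_symplecticToSL hroot),
    sup_eq_left.2 center_le_specialSimilitudeGroup,
    relIndex_range_symplecticToSL_specialSimilitudeGroup hl h2 hroot]

theorem nonempty_mulEquiv_map_range_symplecticToSL (e : l ⊕ l ≃ n) :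
    Nonempty ((symplecticToSL l F).range.map (specialLinearToPSL F e) ≃*
      ProjectiveSymplecticGroup l F) := by
  have hker : ((specialLinearToPSL F e).comp (symplecticToSL l F)).ker =
      Subgroup.center (symplecticGroup l F) := by
    ext A
    rw [← MonoidHom.comap_ker, ker_specialLinearToPSL]
    exact symplecticToSL_mem_center_iff
  exact ⟨(MulEquiv.subgroupCongr (MonoidHom.map_range _ _)).trans
    ((QuotientGroup.quotientKerEquivRange _).symm.trans
      (QuotientGroup.quotientMulEquivOfEq hker))⟩

theorem exists_isCoatom_projectiveSpecialLinearGroup [Nontrivial l] (hl : Even (Fintype.card l))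
    (h2 : (2 : F) ≠ 0) (hroot : ∀ t : F, t ^ Fintype.card (l ⊕ l) = 1 → t ^ 2 = 1)
    (e : l ⊕ l ≃ n) :
    ∃ H : Subgroup (ProjectiveSpecialLinearGroup n F), IsCoatom H ∧
      ∃ N : Subgroup H, N.index = 2 ∧ Nonempty (N ≃* ProjectiveSymplecticGroup l F) := by
  obtain ⟨φ⟩ := nonempty_mulEquiv_map_range_symplecticToSL (F := F) e
  exact ⟨_, isCoatom_map_specialSimilitudeGroup e, _,
    relIndex_map_range_symplecticToSL hl h2 hroot e,
    ⟨(Subgroup.subgroupOfEquivOfLe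
      (Subgroup.map_mono range_symplecticToSL_le_specialSimilitudeGroup)).trans φ⟩⟩

end Projective

theorem psl4_maximal_odd_index_psp4_2_iff_general {F : Type*} [Field F] [Fintype F] :
    (∃ H : Subgroup (Matrix.ProjectiveSpecialLinearGroup (Fin 4) F),
        IsCoatom H ∧ Odd H.index ∧
          ∃ N : Subgroup H, N.Normal ∧ N.index = 2 ∧
            Nonempty (N ≃* (Matrix.symplecticGroup (Fin 2) F ⧸
              Subgroup.center (Matrix.symplecticGroup (Fin 2) F)))) ↔
      Fintype.card F % 4 = 3 := by
  rw [← Nat.card_eq_fintype_card]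
  refine ⟨fun ⟨H, _, hodd, N, _, hN, hφ⟩ => ?_, fun hF => ?_⟩
  · have hF : Nat.card F % 4 ≠ 1 := fun hF =>
      not_nonempty_mulEquiv_projectiveSymplecticGroup hF hN hφ
    exact (odd_iff_of_mul_two_eq hF
      (index_mul_two_of_projectiveSymplecticGroup hF hN hφ.some)).1 hodd
  · have hF' : Nat.card F % 4 ≠ 1 := by lia
    have h2 : (2 : F) ≠ 0 := Ring.two_ne_zero fun h => by
      have := FiniteField.even_card_iff_char_two.1 h
      rw [← Nat.card_eq_fintype_card] at this
      lia
    obtain ⟨H, hH, N, hN, hφ⟩ := exists_isCoatom_projectiveSpecialLinearGroup (l := Fin 2)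
      (by simp) h2 (fun t ht => sq_eq_one_of_pow_four_eq_one hF' (by simpa using ht))
      (finSumFinEquiv (m := 2) (n := 2))
    exact ⟨H, hH, (odd_iff_of_mul_two_eq hF'
      (index_mul_two_of_projectiveSymplecticGroup hF' hN hφ.some)).2 hF, N,
      Subgroup.normal_of_index_eq_two hN, hN, hφ⟩

/-- for `q` an odd prime power and `|F| = q`, the group `PSL₄(F)` has a
maximal subgroup `H` of odd index of shape `PSp₄(q).2` (i.e. admitting a normal subgroup
`N` of index `2` with `N ≅ PSp₄(F) = Sp(4, F) ⧸ center`) iff `q ≡ 3 (mod 4)`. -/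
theorem psl4_maximal_odd_index_psp4_2_iff (q : ℕ) (hq_odd : Odd q) (hq_pp : IsPrimePow q)
    (F : Type) [Field F] [Fintype F] (hF : Fintype.card F = q) :
    (∃ H : Subgroup (Matrix.ProjectiveSpecialLinearGroup (Fin 4) F),
        IsCoatom H ∧ Odd H.index ∧
          ∃ N : Subgroup H, N.Normal ∧ N.index = 2 ∧
            Nonempty (N ≃* (Matrix.symplecticGroup (Fin 2) F ⧸
              Subgroup.center (Matrix.symplecticGroup (Fin 2) F)))) ↔
      q % 4 = 3 := by
  subst hF
  exact psl4_maximal_odd_index_psp4_2_iff_general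
end

section
/- For natural numbers m and n with m ≤ n, one has (∀ i, Nat.testBit m i = true → Nat.testBit n i = true) if and only if (∀ i, Nat.testBit (n - m) i = true → Nat.testBit n i = true); that is, m ⪯ n if and only if n - m ⪯ n. -/
/-!
A natural number is the sum of the powers of two at the positions of its binary ones. If the ones
of `m` are among those of `n`, then `n - m` is the sum of the remaining powers of two of `n`, so by
uniqueness of binary expansions its ones are exactly those of `n` that are not ones of `m`. The
converse is the same fact for `n - m` in place of `m`, because `n - (n - m) = m`.
-/

theorem toFinset_bitIndices_sub {m n : ℕ} (h : m.bitIndices.toFinset ⊆ n.bitIndices.toFinset) :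
    (n - m).bitIndices.toFinset = n.bitIndices.toFinset \ m.bitIndices.toFinset := by
  have hsum : ∑ i ∈ n.bitIndices.toFinset \ m.bitIndices.toFinset, 2 ^ i + m = n := by
    simpa only [Finset.sum_toFinset_bitIndices_two_pow] using
      Finset.sum_sdiff (f := fun i ↦ (2 ^ i : ℕ)) h
  rw [← Nat.eq_sub_of_add_eq hsum, Finset.toFinset_bitIndices_sum_two_pow]

theorem testBit_sub_iff_of_testBit_le {m n : ℕ}
    (h : ∀ i, Nat.testBit m i = true → Nat.testBit n i = true) (i : ℕ) :
    Nat.testBit (n - m) i = true ↔ Nat.testBit n i = true ∧ ¬ Nat.testBit m i = true := by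
  simp only [← Nat.mem_bitIndices, ← List.mem_toFinset] at h ⊢
  rw [toFinset_bitIndices_sub h, Finset.mem_sdiff]

theorem sub_testBit_le_of_testBit_le {m n : ℕ}
    (h : ∀ i, Nat.testBit m i = true → Nat.testBit n i = true) (i : ℕ)
    (hi : Nat.testBit (n - m) i = true) : Nat.testBit n i = true :=
  ((testBit_sub_iff_of_testBit_le h i).mp hi).left

/-- for natural numbers `m ≤ n`, `m ⪯ n` iff `n - m ⪯ n`, where `a ⪯ b`
means every binary digit of `a` is at most the corresponding binary digit of `b`. -/
theorem testBit_le_iff_sub_testBit_le (m n : ℕ) (h : m ≤ n) :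
    (∀ i, Nat.testBit m i = true → Nat.testBit n i = true) ↔
      (∀ i, Nat.testBit (n - m) i = true → Nat.testBit n i = true) := by
  refine ⟨sub_testBit_le_of_testBit_le, fun hsub ↦ ?_⟩
  simpa only [Nat.sub_sub_self h] using sub_testBit_le_of_testBit_le hsub
end
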